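/- Let Ω ⊂ ℝ^d be a bounded open set with Lipschitz boundary, let p > d−1, and let W : Ω×ℝ^{m×d} → [0,+∞] satisfy Assumption 1. Let g ∈ C_c^1(ℝ^d)^m satisfy ∫_Ω W(x, s Dg(x)) dx < +∞ for some s > 1. Then for every u ∈ g + W^{1,p}_0(Ω)^m there exists a sequence u_n ∈ g + C_c^∞(Ω)^m such that u_n → u strongly in W^{1,p}(Ω)^m and ∫_Ω W(x, Du_n) dx → ∫_Ω W(x, Du) dx. In particular, inf over g + W^{1,p}_0(Ω)^m of ∫_Ω W(x, Du) dx equals the inf over g + C_c^∞(Ω)^m. -/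

import Mathlib

open MeasureTheory Metric Set Filter
open scoped ENNReal Topology NNReal RealInnerProductSpace

noncomputable section

/-- `ℝ^d` as a Euclidean space. -/
abbrev Euc (d : ℕ) := EuclideanSpace ℝ (Fin d)

/-- The space `ℝ^{m×d}` of `m×d` matrices. -/
abbrev Mat (m d : ℕ) := Fin m → Fin d → ℝ

/-- Frobenius (Euclidean) norm of an `m×d` matrix. -/
def frobNorm {m d : ℕ} (ξ : Mat m d) : ℝ :=
  Real.sqrt (∑ i, ∑ j, ξ i j ^ 2)

/-- `φ ∈ C_c^∞(Ω)^m`: a smooth function with compact support contained in `Ω`. -/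
def IsCcSmooth {d m : ℕ} (Ω : Set (Euc d)) (φ : Euc d → Euc m) : Prop :=
  ContDiff ℝ (⊤ : ℕ∞) φ ∧ HasCompactSupport φ ∧ tsupport φ ⊆ Ω

/-- The (classical) Jacobian matrix of a differentiable map. -/
def smoothJac {d m : ℕ} (φ : Euc d → Euc m) (x : Euc d) : Mat m d :=
  fun i j => fderiv ℝ φ x (EuclideanSpace.single j 1) i

/-- `Du` is the weak Jacobian of `u` on `Ω` (integration by parts against test functions). -/
def IsWeakJacobianOn {d m : ℕ} (Ω : Set (Euc d)) (u : Euc d → Euc m)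
    (Du : Euc d → Mat m d) : Prop :=
  ∀ φ : Euc d → ℝ, ContDiff ℝ (⊤ : ℕ∞) φ → HasCompactSupport φ → tsupport φ ⊆ Ω →
    ∀ (i : Fin m) (j : Fin d),
      ∫ x in Ω, u x i * fderiv ℝ φ x (EuclideanSpace.single j 1) =
        - ∫ x in Ω, Du x i j * φ x

/-- `u ∈ W^{1,p}(Ω)^m` with weak Jacobian `Du`. -/
def MemW1p {d m : ℕ} (Ω : Set (Euc d)) (p : ℝ≥0∞) (u : Euc d → Euc m)
    (Du : Euc d → Mat m d) : Prop :=
  MemLp u p (volume.restrict Ω) ∧ MemLp Du p (volume.restrict Ω) ∧ IsWeakJacobianOn Ω u Du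

/-- Strong convergence `uₙ → v` in `W^{1,p}(Ω)^m` (together with the Jacobians). -/
def TendstoW1p {d m : ℕ} (Ω : Set (Euc d)) (p : ℝ≥0∞)
    (u : ℕ → Euc d → Euc m) (Du : ℕ → Euc d → Mat m d)
    (v : Euc d → Euc m) (Dv : Euc d → Mat m d) : Prop :=
  Tendsto (fun n => eLpNorm (u n - v) p (volume.restrict Ω)) atTop (𝓝 0) ∧
  Tendsto (fun n => eLpNorm (Du n - Dv) p (volume.restrict Ω)) atTop (𝓝 0)

/-- `v ∈ W_0^{1,p}(Ω)^m`, i.e. `v ∈ W^{1,p}` and `v` is a `W^{1,p}`-limit of functions in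
`C_c^∞(Ω)^m`. -/
def MemW1p0 {d m : ℕ} (Ω : Set (Euc d)) (p : ℝ≥0∞) (v : Euc d → Euc m)
    (Dv : Euc d → Mat m d) : Prop :=
  MemW1p Ω p v Dv ∧
  ∃ w : ℕ → Euc d → Euc m, (∀ n, IsCcSmooth Ω (w n)) ∧
    TendstoW1p Ω p w (fun n => smoothJac (w n)) v Dv

/-- `Ω` has Lipschitz boundary: near each boundary point, `Ω` is the subgraph of a Lipschitz
function over a hyperplane. -/
def HasLipschitzBoundary {d : ℕ} (Ω : Set (Euc d)) : Prop :=
  ∀ x ∈ frontier Ω, ∃ (ν : Euc d) (r L : ℝ) (ψ : Euc d → ℝ),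
    ‖ν‖ = 1 ∧ 0 < r ∧ 0 ≤ L ∧ LipschitzWith (Real.toNNReal L) ψ ∧
    ∀ y ∈ ball x r, (y ∈ Ω ↔ ⟪y, ν⟫ < ψ (y - ⟪y, ν⟫ • ν))

/-- Convexity of a `[0,+∞]`-valued function. -/
def ConvexENNReal {m d : ℕ} (f : Mat m d → ℝ≥0∞) : Prop :=
  ∀ ξ η : Mat m d, ∀ t : ℝ, 0 ≤ t → t ≤ 1 →
    f (t • ξ + (1 - t) • η) ≤ ENNReal.ofReal t * f ξ + ENNReal.ofReal (1 - t) * f η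

/-- The convex biconjugate `f**` of a `[0,+∞]`-valued function: the supremum of all affine
minorants of `f`. -/
def biconj {m d : ℕ} (f : Mat m d → ℝ≥0∞) (ξ : Mat m d) : ℝ≥0∞ :=
  ⨆ (L : Mat m d →ₗ[ℝ] ℝ) (c : ℝ) (_ : ∀ η, ENNReal.ofReal (L η + c) ≤ f η),
    ENNReal.ofReal (L ξ + c)

/-- Assumption (a4): the local stability estimate
`W(x,ξ) ≤ C_M (ess inf_{y ∈ B̄_δ(x) ∩ Ω} W(y,·))**(ξ) + α_M(x)` for `|ξ| ≤ M δ^{-d/p}`. -/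
def StabilityEstimate {d m : ℕ} (Ω : Set (Euc d)) (p : ℝ)
    (W : Euc d → Mat m d → ℝ≥0∞) : Prop :=
  ∀ M : ℝ, 1 < M → ∃ (CM δ₀ : ℝ) (αM : Euc d → ℝ≥0∞),
    0 < CM ∧ 0 < δ₀ ∧ (∫⁻ x in Ω, αM x) < ⊤ ∧
    ∀ δ : ℝ, 0 < δ → δ < δ₀ → ∀ x ∈ Ω, ∀ ξ : Mat m d,
      frobNorm ξ ≤ M * δ ^ (-(d : ℝ) / p) →
      W x ξ ≤ ENNReal.ofReal CM *
          biconj (fun η => essInf (fun y => W y η) (volume.restrict (closedBall x δ ∩ Ω))) ξ +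
        αM x

/-- Assumption 1 of the paper (items (a1)–(a4)) for the integrand `W` on `Ω`, with lower
growth exponent `p`. -/
def Assumption1 {d m : ℕ} (Ω : Set (Euc d)) (p : ℝ) (W : Euc d → Mat m d → ℝ≥0∞) : Prop :=
  Measurable (Function.uncurry W) ∧
  (∀ᵐ x ∂volume.restrict Ω, ConvexENNReal (W x) ∧ LowerSemicontinuous (W x)) ∧
  (∀ᵐ x ∂volume.restrict Ω, ∀ ξ, ENNReal.ofReal (frobNorm ξ ^ p) ≤ W x ξ) ∧
  ((p ≤ (d : ℝ) - 1 →
      ∃ (C q : ℝ) (α : Euc d → ℝ≥0∞), 0 < C ∧ p < q ∧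
        (p < (d : ℝ) - 1 → q ≤ ((d : ℝ) - 1) * p / ((d : ℝ) - 1 - p)) ∧
        (∫⁻ x in Ω, α x) < ⊤ ∧
        ∀ᵐ x ∂volume.restrict Ω, ∀ ξ,
          W x ξ ≤ ENNReal.ofReal (C * frobNorm ξ ^ q) + α x) ∧
    ((d : ℝ) - 1 < p →
      ∃ θ : ℝ, 0 < θ ∧
        (∫⁻ x in Ω, ⨆ ξ ∈ {ξ : Mat m d | frobNorm ξ ≤ θ}, W x ξ) < ⊤)) ∧
  StabilityEstimate Ω p W

/-!
The stability estimate (a4) controls `W(x, ξ)`, for `|ξ| ≲ δ^(-d/p)`, by a convex function lying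
below `W(y, ·)` for almost every `y` at distance at most `δ` from `x`. An average of `Dv` over balls
of radius `δ` has this size because `Dv ∈ L^p`, so Jensen's inequality bounds `W(x, G + t J_n)`,
`t < 1`, by averages of `W(·, G + Dv)` plus a fixed integrable function whenever `J_n` is uniformly
close to an average of `Dv`; the error is absorbed by convexity and the bound on `W` near the
origin. As such averages converge in `L¹`, a dominated convergence argument gives the upper energy
inequality, and lower semicontinuity gives the other one.

It remains to have `J_n = Dφ_n` with `φ_n ∈ C_c^∞(Ω)`. Extend `v` by zero, mollify it at a scale `ε`
and compose with a smooth map `Φ` which pushes the complement of `Ω` away from `Ω`; the Lipschitz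
boundary provides a direction for this in each of finitely many charts. Where `Φ` is locally a
translation, the derivative is an average of `Dv`. The cutoffs gluing the translations are constant
except in about `1/ε` thin annuli: these are half of all the annuli of width `∼ ε`, so that the
gradients stay bounded, and a pigeonhole argument selects them such that each carries only a mass
`O(ε)` of `|Dv|^p`. There the derivative is off by `O(ε (ε / ε^d)^(1/p))`, which tends to zero
because `p > d - 1`.
-/

section LayeredCutoff

theorem deriv_smoothTransition_eq_zero {x : ℝ} (hx : x ∉ Icc 0 1) :
    deriv Real.smoothTransition x = 0 := by
  rcases lt_or_ge x 0 with h | h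
  · refine IsLocalMin.deriv_eq_zero (Eventually.of_forall fun y => ?_)
    rw [Real.smoothTransition.zero_of_nonpos h.le]
    exact Real.smoothTransition.nonneg y
  · refine IsLocalMax.deriv_eq_zero (Eventually.of_forall fun y => ?_)
    rw [Real.smoothTransition.one_of_one_le (not_le.1 fun h' => hx ⟨h, h'⟩).le]
    exact Real.smoothTransition.le_one y

theorem exists_abs_deriv_smoothTransition_le :
    ∃ D : ℝ, 0 ≤ D ∧ ∀ x, |deriv Real.smoothTransition x| ≤ D := by
  have hcont : Continuous (deriv Real.smoothTransition) :=
    (Real.smoothTransition.contDiff (n := 1)).continuous_deriv le_rfl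
  obtain ⟨D, hD⟩ :=
    (isCompact_Icc (a := (0 : ℝ)) (b := 1)).exists_bound_of_continuousOn hcont.continuousOn
  have hD0 : 0 ≤ D := (norm_nonneg _).trans (hD 0 (by simp))
  refine ⟨D, hD0, fun x => ?_⟩
  by_cases hx : x ∈ Icc 0 1
  · exact hD x hx
  · rwa [deriv_smoothTransition_eq_zero hx, abs_zero]

/-- A smooth function on the line that decreases from `1` to `0` in `#I` equal steps, the `k`-th
one being taken on `[3k + 1, 3k + 2]`. Dividing `3ℝ₊` into layers `[3k, 3k + 3)`, only the layers
with index in `I` see a nonzero derivative, and they see it at distance at least `1` from their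
ends. -/
def staircase (I : Finset ℕ) (t : ℝ) : ℝ :=
  1 - (∑ k ∈ I, Real.smoothTransition (t - (3 * k + 1))) / I.card

variable {I : Finset ℕ}

theorem contDiff_staircase (I : Finset ℕ) : ContDiff ℝ (⊤ : ℕ∞) (staircase I) :=
  contDiff_const.sub <| (ContDiff.sum fun _ _ =>
    (Real.smoothTransition.contDiff (n := ⊤)).comp (contDiff_id.sub contDiff_const)).div_const _

theorem hasDerivAt_staircase (I : Finset ℕ) (t : ℝ) :
    HasDerivAt (staircase I)
      (-((∑ k ∈ I, deriv Real.smoothTransition (t - (3 * k + 1))) / I.card)) t := by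
  refine ((HasDerivAt.fun_sum fun k _ => ?_).div_const (I.card : ℝ)).const_sub 1
  have hdiff : DifferentiableAt ℝ Real.smoothTransition (t - (3 * k + 1)) :=
    (Real.smoothTransition.contDiff (n := 1)).differentiable one_ne_zero _
  exact hdiff.hasDerivAt.comp_sub_const t _

theorem staircase_nonneg (I : Finset ℕ) (t : ℝ) : 0 ≤ staircase I t := by
  refine sub_nonneg.2 (div_le_one_of_le₀ ?_ (Nat.cast_nonneg _))
  simpa using Finset.sum_le_card_nsmul I _ 1 fun _ _ => Real.smoothTransition.le_one _

theorem staircase_le_one (I : Finset ℕ) (t : ℝ) : staircase I t ≤ 1 :=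
  sub_le_self _ <| div_nonneg
    (Finset.sum_nonneg fun _ _ => Real.smoothTransition.nonneg _) (Nat.cast_nonneg _)

theorem staircase_eq_one (I : Finset ℕ) {t : ℝ} (ht : t ≤ 0) : staircase I t = 1 := by
  have hzero (k : ℕ) : Real.smoothTransition (t - (3 * k + 1)) = 0 :=
    Real.smoothTransition.zero_of_nonpos (by linarith [k.cast_nonneg (α := ℝ)])
  simp [staircase, hzero]

theorem staircase_eq_zero {N : ℕ} (hI : I ⊆ Finset.range N) (hne : I.Nonempty) {t : ℝ}
    (ht : 3 * N ≤ t) : staircase I t = 0 := by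
  have hone : ∀ k ∈ I, Real.smoothTransition (t - (3 * k + 1)) = 1 := fun k hk => by
    have hkN : (k : ℝ) + 1 ≤ N := by exact_mod_cast Finset.mem_range.1 (hI hk)
    exact Real.smoothTransition.one_of_one_le (by linarith)
  have hcard : (I.card : ℝ) ≠ 0 := by exact_mod_cast hne.card_pos.ne'
  simp [staircase, Finset.sum_congr rfl hone, hcard]

theorem mem_Icc_of_deriv_smoothTransition_ne_zero {k : ℕ} {t : ℝ}
    (h : deriv Real.smoothTransition (t - (3 * k + 1)) ≠ 0) :
    t ∈ Icc (3 * k + 1 : ℝ) (3 * k + 2) := by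
  obtain ⟨h₁, h₂⟩ := not_not.1 (mt deriv_smoothTransition_eq_zero h)
  exact ⟨by linarith, by linarith⟩

theorem exists_mem_of_deriv_staircase_ne_zero {t : ℝ} (h : deriv (staircase I) t ≠ 0) :
    ∃ k ∈ I, t ∈ Icc (3 * k + 1 : ℝ) (3 * k + 2) := by
  rw [(hasDerivAt_staircase I t).deriv, neg_ne_zero] at h
  obtain ⟨k, hk, hne⟩ := Finset.exists_ne_zero_of_sum_ne_zero fun h0 => h (by rw [h0, zero_div])
  exact ⟨k, hk, mem_Icc_of_deriv_smoothTransition_ne_zero hne⟩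

theorem abs_deriv_staircase_le {D : ℝ} (hD : ∀ x, |deriv Real.smoothTransition x| ≤ D) (t : ℝ) :
    |deriv (staircase I) t| ≤ D / I.card := by
  rw [(hasDerivAt_staircase I t).deriv, abs_neg, abs_div, Nat.abs_cast]
  gcongr
  by_cases hall : ∀ k ∈ I, deriv Real.smoothTransition (t - (3 * k + 1)) = 0
  · simpa [Finset.sum_eq_zero hall] using (abs_nonneg _).trans (hD 0)
  · push Not at hall
    obtain ⟨k, hk, hne⟩ := hall
    rw [Finset.sum_eq_single_of_mem k hk]
    · exact hD _
    · intro j _ hjk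
      by_contra hj
      have ht := mem_Icc_of_deriv_smoothTransition_ne_zero hne
      have ht' := mem_Icc_of_deriv_smoothTransition_ne_zero hj
      have hkj : (k : ℝ) < j + 1 := by linarith [ht.1, ht'.2]
      have hjk' : (j : ℝ) < k + 1 := by linarith [ht'.1, ht.2]
      exact hjk <| le_antisymm (Nat.lt_succ_iff.1 (by exact_mod_cast hjk'))
        (Nat.lt_succ_iff.1 (by exact_mod_cast hkj))

theorem exists_finset_measureReal_le {X : Type*} [MeasurableSpace X] (μ : Measure X)
    [IsFiniteMeasure μ] {E : ℕ → Set X} (hE : ∀ k, MeasurableSet (E k))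
    (hdisj : Pairwise (Function.onFun Disjoint E)) {N : ℕ} (hN : 0 < N) :
    ∃ I ⊆ Finset.range N, (N : ℝ) / 2 ≤ I.card ∧
      ∀ k ∈ I, μ.real (E k) ≤ 2 * μ.real univ / N := by
  classical
  set P : ℕ → Prop := fun k => μ.real (E k) ≤ 2 * μ.real univ / N
  refine ⟨(Finset.range N).filter P, Finset.filter_subset _ _, ?_,
    fun k hk => (Finset.mem_filter.1 hk).2⟩
  set J := (Finset.range N).filter fun k => ¬ P k
  have hcard : (((Finset.range N).filter P).card : ℝ) + J.card = N := by
    exact_mod_cast (Finset.card_filter_add_card_filter_not (s := Finset.range N) P).trans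
      (Finset.card_range N)
  suffices hJ : (J.card : ℝ) ≤ N / 2 by linarith
  by_contra! hlt
  have hN' : (0 : ℝ) < N := by exact_mod_cast hN
  have hne : J.Nonempty := Finset.card_pos.1 (by exact_mod_cast (half_pos hN').trans hlt)
  have hsum : ∑ k ∈ J, μ.real (E k) ≤ μ.real univ := by
    rw [← measureReal_biUnion_finset (fun i _ j _ hij => hdisj hij) fun k _ => hE k]
    exact measureReal_mono (subset_univ _)
  have hgt : J.card * (2 * μ.real univ / N) < ∑ k ∈ J, μ.real (E k) := by
    rw [← nsmul_eq_mul, ← Finset.sum_const]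
    exact Finset.sum_lt_sum_of_nonempty hne fun k hk => not_le.1 (Finset.mem_filter.1 hk).2
  have hle : N / 2 * (2 * μ.real univ / N) ≤ J.card * (2 * μ.real univ / N) := by gcongr
  have hT : N / 2 * (2 * μ.real univ / N) = μ.real univ := by field_simp
  linarith

variable {F : Type*} [NormedAddCommGroup F] {x₀ : F} {r : ℝ} {N : ℕ}

/-- The squared distance to `x₀`, rescaled so that `[0, 3 * N]` corresponds to the annulus between
the spheres of radii `r / 2` and `3 * r / 4`. -/
def annulusParam (x₀ : F) (r : ℝ) (N : ℕ) (x : F) : ℝ :=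
  48 * N / (5 * r ^ 2) * (‖x - x₀‖ ^ 2 - (r / 2) ^ 2)

theorem annulusParam_nonpos {x : F} (hx : x ∈ ball x₀ (r / 2)) : annulusParam x₀ r N x ≤ 0 := by
  rw [mem_ball_iff_norm] at hx
  refine mul_nonpos_of_nonneg_of_nonpos (by positivity) (sub_nonpos.2 ?_)
  gcongr

theorem mem_ball_of_annulusParam_lt (hr : 0 < r) {x : F} (hx : annulusParam x₀ r N x < 3 * N) :
    x ∈ ball x₀ (3 * r / 4) := by
  rw [mem_ball_iff_norm]
  by_contra! hle
  have hN : (3 * N : ℝ) = 48 * N / (5 * r ^ 2) * ((3 * r / 4) ^ 2 - (r / 2) ^ 2) := by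
    field_simp
    ring
  refine hx.not_ge ?_
  rw [hN, annulusParam]
  gcongr

theorem abs_annulusParam_sub_lt (hr : 0 < r) (hN : 0 < N) {x y : F} (hx : ‖x - x₀‖ < r)
    (hxy : ‖y - x‖ < 5 * r / (144 * N)) :
    |annulusParam x₀ r N y - annulusParam x₀ r N x| < 1 := by
  have hN' : (1 : ℝ) ≤ N := by exact_mod_cast hN
  have hδr : 5 * r / (144 * N) ≤ r := by
    rw [div_le_iff₀ (by positivity)]
    nlinarith
  have hsub : |‖y - x₀‖ - ‖x - x₀‖| ≤ ‖y - x‖ := by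
    simpa using abs_norm_sub_norm_le (y - x₀) (x - x₀)
  have hadd : ‖y - x₀‖ + ‖x - x₀‖ ≤ 3 * r := by linarith [(abs_le.1 hsub).2]
  have hfactor : annulusParam x₀ r N y - annulusParam x₀ r N x =
      48 * N / (5 * r ^ 2) * ((‖y - x₀‖ + ‖x - x₀‖) * (‖y - x₀‖ - ‖x - x₀‖)) := by
    simp only [annulusParam]
    ring
  calc |annulusParam x₀ r N y - annulusParam x₀ r N x|
      = 48 * N / (5 * r ^ 2) * ((‖y - x₀‖ + ‖x - x₀‖) * |‖y - x₀‖ - ‖x - x₀‖|) := by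
        rw [hfactor, abs_mul, abs_mul, abs_of_nonneg (by positivity),
          abs_of_nonneg (by positivity)]
    _ ≤ 48 * N / (5 * r ^ 2) * (3 * r * ‖y - x‖) := by gcongr
    _ < 48 * N / (5 * r ^ 2) * (3 * r * (5 * r / (144 * N))) := by gcongr
    _ = 1 := by
        field_simp
        norm_num

theorem mem_ball_of_deriv_staircase_ne_zero (hr : 0 < r) (hI : I ⊆ Finset.range N) {x : F}
    (h : deriv (staircase I) (annulusParam x₀ r N x) ≠ 0) : x ∈ ball x₀ (3 * r / 4) := by
  obtain ⟨k, hk, hxk⟩ := exists_mem_of_deriv_staircase_ne_zero h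
  have hkN : (k : ℝ) + 1 ≤ N := by exact_mod_cast Finset.mem_range.1 (hI hk)
  exact mem_ball_of_annulusParam_lt hr (by linarith [hxk.2])

variable [InnerProductSpace ℝ F]

theorem contDiff_annulusParam (x₀ : F) (r : ℝ) (N : ℕ) :
    ContDiff ℝ (⊤ : ℕ∞) (annulusParam x₀ r N) :=
  contDiff_const.mul (((contDiff_id.sub contDiff_const).norm_sq ℝ).sub contDiff_const)

theorem hasFDerivAt_annulusParam (x₀ : F) (r : ℝ) (N : ℕ) (x : F) :
    HasFDerivAt (annulusParam x₀ r N)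
      ((48 * N / (5 * r ^ 2)) • (2 : ℕ) • innerSL ℝ (x - x₀)) x := by
  have hsq : HasFDerivAt (fun x => ‖x - x₀‖ ^ 2 - (r / 2) ^ 2)
      ((2 : ℕ) • innerSL ℝ (x - x₀)) x := by
    simpa using ((hasFDerivAt_id x).sub_const x₀).norm_sq.sub_const ((r / 2) ^ 2)
  exact hsq.const_mul _

theorem hasFDerivAt_staircase_annulusParam (I : Finset ℕ) (x₀ : F) (r : ℝ) (N : ℕ) (x : F) :
    HasFDerivAt (fun x => staircase I (annulusParam x₀ r N x))
      (deriv (staircase I) (annulusParam x₀ r N x) •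
        (48 * N / (5 * r ^ 2)) • (2 : ℕ) • innerSL ℝ (x - x₀)) x :=
  (hasDerivAt_staircase I _).differentiableAt.hasDerivAt.comp_hasFDerivAt
    (h₂ := staircase I) x (hasFDerivAt_annulusParam x₀ r N x)

theorem norm_fderiv_staircase_annulusParam_le (hr : 0 < r) (hN : 0 < N)
    (hI : I ⊆ Finset.range N) (hcard : (N : ℝ) / 2 ≤ I.card) {D : ℝ}
    (hD : ∀ x, |deriv Real.smoothTransition x| ≤ D) (x : F) :
    ‖fderiv ℝ (fun x => staircase I (annulusParam x₀ r N x)) x‖ ≤ 192 * D / (5 * r) := by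
  have : (0 : ℝ) < N := by exact_mod_cast hN
  have hD0 : 0 ≤ D := (abs_nonneg _).trans (hD 0)
  rw [(hasFDerivAt_staircase_annulusParam I x₀ r N x).fderiv]
  by_cases h0 : deriv (staircase I) (annulusParam x₀ r N x) = 0
  · rw [h0, zero_smul, norm_zero]
    positivity
  have hxr : ‖x - x₀‖ ≤ r := by
    have := mem_ball_iff_norm.1 (mem_ball_of_deriv_staircase_ne_zero hr hI h0)
    linarith
  have hderiv : |deriv (staircase I) (annulusParam x₀ r N x)| ≤ D / (N / 2) :=
    (abs_deriv_staircase_le hD _).trans (by gcongr)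
  rw [norm_smul, norm_smul, ← Nat.cast_smul_eq_nsmul ℝ, norm_smul, innerSL_apply_norm,
    Real.norm_eq_abs, Real.norm_of_nonneg (by positivity), Nat.cast_ofNat, Real.norm_ofNat]
  calc _ ≤ D / (N / 2) * (48 * N / (5 * r ^ 2) * (2 * r)) := by gcongr
    _ = 192 * D / (5 * r) := by
      field_simp
      ring

variable [MeasurableSpace F] {μ : Measure F}

/-- A smooth cutoff of the ball of radius `r` around `x₀`, equal to `1` on the half ball, whose
gradient is bounded by `B` and lives only where balls of radius `δ` have `μ`-mass at most `β`. -/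
structure IsLayeredCutoff (μ : Measure F) (x₀ : F) (r δ B β : ℝ) (χ : F → ℝ) : Prop where
  contDiff : ContDiff ℝ (⊤ : ℕ∞) χ
  mem_Icc : ∀ x, χ x ∈ Icc 0 1
  eq_one : ∀ x ∈ ball x₀ (r / 2), χ x = 1
  support_subset : Function.support χ ⊆ ball x₀ (3 * r / 4)
  norm_fderiv_le : ∀ x, ‖fderiv ℝ χ x‖ ≤ B
  measureReal_ball_le : ∀ x, fderiv ℝ χ x ≠ 0 → μ.real (ball x δ) ≤ β

theorem IsLayeredCutoff.mono [IsFiniteMeasure μ] {δ δ' B β β' : ℝ} {χ : F → ℝ}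
    (h : IsLayeredCutoff μ x₀ r δ B β χ) (hδ : δ' ≤ δ) (hβ : β ≤ β') :
    IsLayeredCutoff μ x₀ r δ' B β' χ where
  __ := h
  measureReal_ball_le x hx :=
    (measureReal_mono (ball_subset_ball hδ)).trans ((h.measureReal_ball_le x hx).trans hβ)

theorem exists_isLayeredCutoff [BorelSpace F] (μ : Measure F) [IsFiniteMeasure μ] (x₀ : F)
    (hr : 0 < r) : ∃ B : ℝ, 0 ≤ B ∧ ∀ N : ℕ, 0 < N → ∃ χ : F → ℝ,
      IsLayeredCutoff μ x₀ r (5 * r / (144 * N)) B (2 * μ.real univ / N) χ := by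
  obtain ⟨D, hD0, hD⟩ := exists_abs_deriv_smoothTransition_le
  refine ⟨192 * D / (5 * r), by positivity, fun N hN => ?_⟩
  set ρ := annulusParam x₀ r N
  set E : ℕ → Set F := fun k => {x | ⌊ρ x / 3⌋ = k}
  have hmeas (k : ℕ) : MeasurableSet (E k) :=
    Int.measurable_floor.comp ((contDiff_annulusParam x₀ r N).continuous.measurable.div_const 3)
      (measurableSet_singleton (k : ℤ))
  have hdisj : Pairwise (Function.onFun Disjoint E) := fun i j hij =>
    Set.disjoint_left.2 fun x (hi : ⌊ρ x / 3⌋ = i) (hj : ⌊ρ x / 3⌋ = j) =>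
      hij (by exact_mod_cast hi.symm.trans hj)
  obtain ⟨I, hI, hcard, hmass⟩ := exists_finset_measureReal_le μ hmeas hdisj hN
  have hne : I.Nonempty := Finset.card_pos.1 <| by
    have : (0 : ℝ) < N := by exact_mod_cast hN
    exact_mod_cast (half_pos this).trans_le hcard
  refine ⟨fun x => staircase I (ρ x), ⟨(contDiff_staircase I).comp (contDiff_annulusParam x₀ r N),
    fun x => ⟨staircase_nonneg I _, staircase_le_one I _⟩,
    fun x hx => staircase_eq_one I (annulusParam_nonpos hx), fun x hx => ?_,
    norm_fderiv_staircase_annulusParam_le hr hN hI hcard hD, fun x hx => ?_⟩⟩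
  · exact mem_ball_of_annulusParam_lt hr (not_le.1 fun h => hx (staircase_eq_zero hI hne h))
  · rw [(hasFDerivAt_staircase_annulusParam I x₀ r N x).fderiv] at hx
    have h' := left_ne_zero_of_smul hx
    have hxr : ‖x - x₀‖ < r := by
      have := mem_ball_iff_norm.1 (mem_ball_of_deriv_staircase_ne_zero hr hI h')
      linarith
    obtain ⟨k, hk, hxk⟩ := exists_mem_of_deriv_staircase_ne_zero h'
    refine (measureReal_mono fun y hy => ?_).trans (hmass k hk)
    have hyx := abs_lt.1 (abs_annulusParam_sub_lt hr hN hxr (mem_ball_iff_norm.1 hy))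
    refine Int.floor_eq_iff.2 ⟨?_, ?_⟩ <;> push_cast <;> linarith [hyx.1, hyx.2, hxk.1, hxk.2]

theorem eventually_exists_isLayeredCutoff [BorelSpace F] (μ : Measure F) [IsFiniteMeasure μ]
    (x₀ : F) (hr : 0 < r) {K : ℝ} (hK : 0 < K) :
    ∃ B C : ℝ, 0 ≤ B ∧ 0 ≤ C ∧ ∀ᶠ ε in 𝓝[>] 0, ∃ χ : F → ℝ,
      IsLayeredCutoff μ x₀ r (K * ε) B (C * ε) χ := by
  obtain ⟨B, hB, hχ⟩ := exists_isLayeredCutoff μ x₀ hr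
  refine ⟨B, 4 * μ.real univ * (144 * K) / (5 * r), hB, by positivity, ?_⟩
  filter_upwards [self_mem_nhdsWithin, Ioo_mem_nhdsGT (show 0 < 5 * r / (144 * K) by positivity)]
    with ε hε0 hε
  have hε0 : 0 < ε := hε0
  set z := 5 * r / (144 * K * ε) with hz
  have hz1 : 1 ≤ z := by
    rw [hz, one_le_div (by positivity), mul_comm, ← le_div_iff₀ (by positivity)]
    exact hε.2.le
  have hN : 0 < ⌊z⌋₊ := Nat.floor_pos.2 hz1
  obtain ⟨χ, h⟩ := hχ ⌊z⌋₊ hN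
  have : (0 : ℝ) < ⌊z⌋₊ := by exact_mod_cast hN
  refine ⟨χ, h.mono ?_ ?_⟩
  · have := Nat.floor_le (zero_le_one.trans hz1)
    rw [hz, le_div_iff₀ (by positivity)] at this
    rw [le_div_iff₀ (by positivity)]
    linarith
  · have hzN : z / 2 ≤ ⌊z⌋₊ := by
      have : (1 : ℝ) ≤ ⌊z⌋₊ := by exact_mod_cast hN
      linarith [Nat.lt_floor_add_one z]
    calc 2 * μ.real univ / ⌊z⌋₊ ≤ 2 * μ.real univ / (z / 2) := by gcongr
      _ = 4 * μ.real univ * (144 * K) / (5 * r) * ε := by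
        rw [hz]
        field_simp
        ring

end LayeredCutoff

section OutwardDeformation

variable {F : Type*} [NormedAddCommGroup F] [InnerProductSpace ℝ F] {Ω : Set F}

theorem norm_sub_inner_smul_le {ν : F} (hν : ‖ν‖ = 1) (h : F) : ‖h - ⟪h, ν⟫ • ν‖ ≤ ‖h‖ := by
  have hsq : ‖h - ⟪h, ν⟫ • ν‖ ^ 2 = ‖h‖ ^ 2 - ⟪h, ν⟫ ^ 2 := by
    rw [norm_sub_sq_real, inner_smul_right, norm_smul, hν, mul_one, Real.norm_eq_abs, sq_abs]
    ring
  exact le_of_sq_le_sq (hsq.trans_le (sub_le_self _ (sq_nonneg _))) (norm_nonneg _)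

theorem lipschitzWith_two_of_norm_fderiv_sub_id_le {Φ : F → F} (hΦ : Differentiable ℝ Φ)
    (h : ∀ x, ‖fderiv ℝ Φ x - ContinuousLinearMap.id ℝ F‖ ≤ 1) : LipschitzWith 2 Φ := by
  refine lipschitzWith_of_nnnorm_fderiv_le (𝕜 := ℝ) hΦ fun x => ?_
  rw [← NNReal.coe_le_coe, coe_nnnorm, NNReal.coe_ofNat,
    ← sub_add_cancel (fderiv ℝ Φ x) (ContinuousLinearMap.id ℝ F)]
  refine (norm_add_le _ _).trans ?_
  linarith [h x, ContinuousLinearMap.norm_id_le (𝕜 := ℝ) (E := F)]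

/-- Inside `U`, the complement of `Ω` is stable under translation by the vectors of the cone with
axis `ν` and aperture `a`. -/
def IsOuterConeOn (Ω U : Set F) (ν : F) (a : ℝ) : Prop :=
  ∀ z ∈ U, z ∉ Ω → ∀ (τ : ℝ) (h : F), ‖h‖ ≤ a * τ → z + τ • ν + h ∈ U → z + τ • ν + h ∉ Ω

theorem IsOuterConeOn.mono {U : Set F} {ν : F} {a a' : ℝ} (hcone : IsOuterConeOn Ω U ν a')
    (ha : 0 < a) (haa' : a ≤ a') : IsOuterConeOn Ω U ν a := fun z hz hzΩ τ h hh => by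
  have hτ : 0 ≤ τ := nonneg_of_mul_nonneg_right ((norm_nonneg h).trans hh) ha
  exact hcone z hz hzΩ τ h (hh.trans (by gcongr))

theorem isOuterConeOn_of_subgraph {U : Set F} {ν : F} (hν : ‖ν‖ = 1) {L : ℝ≥0} {ψ : F → ℝ}
    (hψ : LipschitzWith L ψ) (hU : ∀ y ∈ U, (y ∈ Ω ↔ ⟪y, ν⟫ < ψ (y - ⟪y, ν⟫ • ν))) :
    IsOuterConeOn Ω U ν (1 + L)⁻¹ := by
  intro z hz hzΩ τ h hh hz'
  rw [hU _ hz, not_lt] at hzΩ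
  rw [hU _ hz', not_lt]
  have hinner : ⟪z + τ • ν + h, ν⟫ = ⟪z, ν⟫ + τ + ⟪h, ν⟫ := by
    simp only [inner_add_left, real_inner_smul_left, real_inner_self_eq_norm_sq, hν]
    ring
  have hproj : z + τ • ν + h - ⟪z + τ • ν + h, ν⟫ • ν = z - ⟪z, ν⟫ • ν + (h - ⟪h, ν⟫ • ν) := by
    rw [hinner, add_smul, add_smul]
    abel
  have hlip : |ψ (z - ⟪z, ν⟫ • ν + (h - ⟪h, ν⟫ • ν)) - ψ (z - ⟪z, ν⟫ • ν)| ≤ L * ‖h‖ := by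
    have := hψ.dist_le_mul (z - ⟪z, ν⟫ • ν + (h - ⟪h, ν⟫ • ν)) (z - ⟪z, ν⟫ • ν)
    rw [Real.dist_eq, dist_eq_norm, add_sub_cancel_left] at this
    exact this.trans (by gcongr; exact norm_sub_inner_smul_le hν h)
  have hhν : |⟪h, ν⟫| ≤ ‖h‖ := by simpa [hν] using abs_real_inner_le_norm h ν
  have hτ : (1 + L) * ‖h‖ ≤ τ := by
    rwa [inv_mul_eq_div, le_div_iff₀' (by positivity)] at hh
  rw [hproj, hinner]
  linarith [(abs_le.1 hlip).2, (abs_le.1 hhν).1]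

/-- A finite cover of the boundary of `Ω` by the half balls `ball k (r k / 2)`, `k ∈ t`, such that
`Ω` has the outer cone property in direction `ν k` on each `ball k (r k)`. -/
structure OuterConeCover (Ω : Set F) (t : Finset F) (r : F → ℝ) (ν : F → F) (a : ℝ) : Prop where
  aperture_pos : 0 < a
  radius_pos : ∀ k ∈ t, 0 < r k
  norm_axis : ∀ k ∈ t, ‖ν k‖ = 1
  isOuterConeOn : ∀ k ∈ t, IsOuterConeOn Ω (ball k (r k)) (ν k) a
  frontier_subset : frontier Ω ⊆ ⋃ k ∈ t, ball k (r k / 2)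

theorem HasLipschitzBoundary.exists_outerConeCover {d : ℕ} {Ω : Set (Euc d)}
    (hΩ : HasLipschitzBoundary Ω) (hΩb : Bornology.IsBounded Ω) :
    ∃ t r ν a, OuterConeCover Ω t r ν a := by
  choose! ν r L ψ hν hr _ hψ hU using hΩ
  have hcompact : IsCompact (frontier Ω) :=
    hΩb.isCompact_closure.of_isClosed_subset isClosed_frontier frontier_subset_closure
  obtain ⟨t, htΩ, ht⟩ := hcompact.elim_nhds_subcover (fun x => ball x (r x / 2))
    fun x hx => ball_mem_nhds x (half_pos (hr x hx))
  have haperture : ∀ᶠ a in 𝓝[>] (0 : ℝ), ∀ k ∈ t, a ≤ (1 + (L k).toNNReal : ℝ)⁻¹ :=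
    (eventually_all_finset t).2 fun k _ =>
      mem_of_superset (Ioc_mem_nhdsGT (by positivity)) fun _ ha => ha.2
  obtain ⟨a, hat, ha⟩ := (haperture.and self_mem_nhdsWithin).exists
  exact ⟨t, r, ν, a, ha, fun k hk => hr k (htΩ k hk), fun k hk => hν k (htΩ k hk),
    fun k hk => (isOuterConeOn_of_subgraph (hν k (htΩ k hk)) (hψ k (htΩ k hk))
      (hU k (htΩ k hk))).mono ha (hat k hk), ht⟩

/-- The map `x => x + ε ∑ χ k x ν k`, which moves the points close to `k ∈ J` in direction `ν k`. -/
def pushOut (ε : ℝ) (J : Finset F) (χ : F → F → ℝ) (ν : F → F) (x : F) : F :=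
  x + ε • ∑ k ∈ J, χ k x • ν k

variable {t J : Finset F} {r : F → ℝ} {ν : F → F} {a : ℝ} {χ : F → F → ℝ} {ε δ : ℝ} {B β : F → ℝ}

theorem pushOut_insert [DecidableEq F] {k : F} (hk : k ∉ J) (x : F) :
    pushOut ε (insert k J) χ ν x = pushOut ε J χ ν x + (ε * χ k x) • ν k := by
  rw [pushOut, pushOut, Finset.sum_insert hk, smul_add, smul_smul]
  abel

variable [MeasurableSpace F] {μ : Measure F}

theorem norm_pushOut_sub_le (hε : 0 ≤ ε) (hν : ∀ k ∈ t, ‖ν k‖ = 1)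
    (hχ : ∀ k ∈ t, IsLayeredCutoff μ k (r k) δ (B k) (β k) (χ k)) (hJ : J ⊆ t) (x : F) :
    ‖pushOut ε J χ ν x - x‖ ≤ t.card * ε := by
  have hterm : ∀ k ∈ J, ‖χ k x • ν k‖ ≤ 1 := fun k hk => by
    have hmem := (hχ k (hJ hk)).mem_Icc x
    rw [norm_smul, hν k (hJ hk), mul_one, Real.norm_of_nonneg hmem.1]
    exact hmem.2
  have hsum : ‖∑ k ∈ J, χ k x • ν k‖ ≤ t.card := by
    refine (norm_sum_le_of_le J hterm).trans ?_
    simpa using Finset.card_le_card hJ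
  rw [pushOut, add_sub_cancel_left, norm_smul, Real.norm_of_nonneg hε, mul_comm]
  gcongr

theorem pushOut_add_mem_ball (hε : 0 ≤ ε) (hν : ∀ k ∈ t, ‖ν k‖ = 1)
    (hχ : ∀ k ∈ t, IsLayeredCutoff μ k (r k) δ (B k) (β k) (χ k)) (hJ : J ⊆ t) {x h k : F}
    (hk : k ∈ t) (hkx : χ k x ≠ 0) (hh : t.card * ε + ‖h‖ < r k / 4) :
    pushOut ε J χ ν x + h ∈ ball k (r k) := by
  have hxk := mem_ball_iff_norm.1 ((hχ k hk).support_subset hkx)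
  have hsplit : pushOut ε J χ ν x + h - k = (x - k) + (pushOut ε J χ ν x - x) + h := by abel
  rw [mem_ball_iff_norm, hsplit]
  refine norm_add₃_le.trans_lt ?_
  linarith [norm_pushOut_sub_le hε hν hχ hJ x]

theorem OuterConeCover.pushOut_notMem (hcov : OuterConeCover Ω t r ν a) (hε : 0 ≤ ε)
    (hχ : ∀ k ∈ t, IsLayeredCutoff μ k (r k) δ (B k) (β k) (χ k))
    (hεr : ∀ k ∈ t, t.card * ε < r k / 4) (hJ : J ⊆ t) {y : F} (hy : y ∉ Ω) :
    pushOut ε J χ ν y ∉ Ω := by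
  classical
  induction J using Finset.induction_on with
  | empty => simpa [pushOut] using hy
  | insert k J hkJ ih =>
    have hk : k ∈ t := hJ (Finset.mem_insert_self k J)
    have hJt : J ⊆ t := (Finset.subset_insert k J).trans hJ
    by_cases hky : χ k y = 0
    · simpa [pushOut_insert hkJ, hky] using ih hJt
    · have hball {J' : Finset F} (hJ' : J' ⊆ t) : pushOut ε J' χ ν y ∈ ball k (r k) := by
        simpa using pushOut_add_mem_ball hε hcov.norm_axis hχ hJ' (h := 0) hk hky
          (by simpa using hεr k hk)
      have hτ : 0 ≤ ε * χ k y := mul_nonneg hε ((hχ k hk).mem_Icc y).1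
      have hcone := hcov.isOuterConeOn k hk _ (hball hJt) (ih hJt) (ε * χ k y) 0
        (by simpa using mul_nonneg hcov.aperture_pos.le hτ)
      rw [add_zero, ← pushOut_insert hkJ] at hcone
      exact hcone (hball hJ)

/- The chart `i` in which `y` is fully moved is applied last: its translation by `ε • ν i` leaves
room for the perturbation `h`. -/
theorem OuterConeCover.pushOut_add_notMem_of_mem_ball (hcov : OuterConeCover Ω t r ν a)
    (hε : 0 ≤ ε) (hχ : ∀ k ∈ t, IsLayeredCutoff μ k (r k) δ (B k) (β k) (χ k))
    (hεr : ∀ k ∈ t, (t.card + a) * ε < r k / 4) {i y h : F} (hi : i ∈ t)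
    (hyi : y ∈ ball i (r i / 2)) (hy : y ∉ Ω) (hh : ‖h‖ ≤ a * ε) :
    pushOut ε t χ ν y + h ∉ Ω := by
  classical
  have haε : 0 ≤ a * ε := mul_nonneg hcov.aperture_pos.le hε
  have hεr' : ∀ k ∈ t, t.card * ε < r k / 4 := fun k hk => by linarith [hεr k hk]
  have hone : χ i y = 1 := (hχ i hi).eq_one y hyi
  have hne : χ i y ≠ 0 := hone.symm ▸ one_ne_zero
  have hlast : pushOut ε t χ ν y = pushOut ε (t.erase i) χ ν y + ε • ν i := by
    simpa [Finset.insert_erase hi, hone] using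
      pushOut_insert (ε := ε) (χ := χ) (ν := ν) (Finset.notMem_erase i t) y
  have hball : pushOut ε (t.erase i) χ ν y ∈ ball i (r i) := by
    simpa using pushOut_add_mem_ball hε hcov.norm_axis hχ (t.erase_subset i) (h := 0) hi hne
      (by simpa using hεr' i hi)
  have hball' : pushOut ε t χ ν y + h ∈ ball i (r i) :=
    pushOut_add_mem_ball hε hcov.norm_axis hχ subset_rfl hi hne (by linarith [hεr i hi])
  rw [hlast] at hball' ⊢
  exact hcov.isOuterConeOn i hi _ hball
    (hcov.pushOut_notMem hε hχ hεr' (t.erase_subset i) hy) ε h hh hball'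

theorem OuterConeCover.pushOut_add_notMem (hcov : OuterConeCover Ω t r ν a)
    (hε : 0 ≤ ε) (hχ : ∀ k ∈ t, IsLayeredCutoff μ k (r k) δ (B k) (β k) (χ k))
    (hεr : ∀ k ∈ t, (t.card + a) * ε < r k / 4) {ρ : ℝ}
    (hρ : thickening ρ (closure Ω) ⊆ Ω ∪ ⋃ k ∈ t, ball k (r k / 2))
    (hερ : (t.card + a) * ε < ρ) {y h : F} (hy : y ∉ Ω) (hh : ‖h‖ ≤ a * ε) :
    pushOut ε t χ ν y + h ∉ Ω := by
  by_cases hyt : y ∈ ⋃ k ∈ t, ball k (r k / 2)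
  · obtain ⟨i, hi, hyi⟩ := mem_iUnion₂.1 hyt
    exact hcov.pushOut_add_notMem_of_mem_ball hε hχ hεr hi hyi hy hh
  · intro hmem
    have hfar : y ∉ thickening ρ (closure Ω) := fun hy' => (hρ hy').elim hy hyt
    refine hfar (mem_thickening_iff.2 ⟨_, subset_closure hmem, ?_⟩)
    have hsplit : pushOut ε t χ ν y + h - y = (pushOut ε t χ ν y - y) + h := by abel
    rw [dist_comm, dist_eq_norm, hsplit]
    refine (norm_add_le _ _).trans_lt ?_
    linarith [norm_pushOut_sub_le hε hcov.norm_axis hχ subset_rfl y]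

theorem contDiff_pushOut (hχ : ∀ k ∈ t, IsLayeredCutoff μ k (r k) δ (B k) (β k) (χ k)) :
    ContDiff ℝ (⊤ : ℕ∞) (pushOut ε t χ ν) :=
  contDiff_id.add <| contDiff_const.smul <| ContDiff.sum fun k hk =>
    (hχ k hk).contDiff.smul contDiff_const

theorem fderiv_pushOut (hχ : ∀ k ∈ t, IsLayeredCutoff μ k (r k) δ (B k) (β k) (χ k)) (x : F) :
    fderiv ℝ (pushOut ε t χ ν) x =
      ContinuousLinearMap.id ℝ F + ε • ∑ k ∈ t, (fderiv ℝ (χ k) x).smulRight (ν k) := by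
  refine HasFDerivAt.fderiv ((hasFDerivAt_id x).add ((HasFDerivAt.fun_sum fun k hk => ?_).const_smul
    ε))
  exact ((hχ k hk).contDiff.differentiable (by simp) x).hasFDerivAt.smul_const (ν k)

theorem norm_fderiv_pushOut_sub_id_le (hε : 0 ≤ ε) (hν : ∀ k ∈ t, ‖ν k‖ = 1)
    (hχ : ∀ k ∈ t, IsLayeredCutoff μ k (r k) δ (B k) (β k) (χ k)) (x : F) :
    ‖fderiv ℝ (pushOut ε t χ ν) x - ContinuousLinearMap.id ℝ F‖ ≤ (∑ k ∈ t, B k) * ε := by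
  rw [fderiv_pushOut hχ, add_sub_cancel_left, norm_smul, Real.norm_of_nonneg hε, mul_comm]
  gcongr
  refine norm_sum_le_of_le t fun k hk => ?_
  rw [ContinuousLinearMap.norm_smulRight_apply, hν k hk, mul_one]
  exact (hχ k hk).norm_fderiv_le x

theorem measureReal_ball_le_of_fderiv_pushOut_ne_id
    (hχ : ∀ k ∈ t, IsLayeredCutoff μ k (r k) δ (B k) (β k) (χ k)) (hβ : ∀ k ∈ t, 0 ≤ β k) {x : F}
    (hx : fderiv ℝ (pushOut ε t χ ν) x ≠ ContinuousLinearMap.id ℝ F) :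
    μ.real (ball x δ) ≤ ∑ k ∈ t, β k := by
  obtain ⟨k, hk, hne⟩ : ∃ k ∈ t, fderiv ℝ (χ k) x ≠ 0 := by
    by_contra! hzero
    refine hx ?_
    rw [fderiv_pushOut hχ, Finset.sum_eq_zero fun k hk => ?_, smul_zero, add_zero]
    ext
    simp [hzero k hk]
  exact ((hχ k hk).measureReal_ball_le x hne).trans (Finset.single_le_sum hβ hk)

/-- A smooth map that moves a neighbourhood of the complement of `Ω` away from `Ω`, so that the
`c`-neighbourhood of its image misses `Ω`. It displaces points by at most `δ - c`, is `b`-close to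
the identity in `C¹`, and its derivative differs from the identity only at centres of `δ`-balls of
`μ`-mass at most `β`. -/
structure IsOutwardDeformation (Ω : Set F) (μ : Measure F) (c δ b β : ℝ) (Φ : F → F) : Prop where
  contDiff : ContDiff ℝ (⊤ : ℕ∞) Φ
  norm_sub_add_le : ∀ x, ‖Φ x - x‖ + c ≤ δ
  exists_disjoint_ball : ∃ ρ > 0, ∀ x, ¬ ball x ρ ⊆ Ω → Disjoint (ball (Φ x) c) Ω
  norm_fderiv_sub_id_le : ∀ x, ‖fderiv ℝ Φ x - ContinuousLinearMap.id ℝ F‖ ≤ b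
  measureReal_ball_le : ∀ x, fderiv ℝ Φ x ≠ ContinuousLinearMap.id ℝ F → μ.real (ball x δ) ≤ β

theorem OuterConeCover.isOutwardDeformation_pushOut (hcov : OuterConeCover Ω t r ν a) (hε : 0 < ε)
    (hχ : ∀ k ∈ t, IsLayeredCutoff μ k (r k) ((t.card + a) * ε) (B k) (β k) (χ k))
    (hβ : ∀ k ∈ t, 0 ≤ β k) (hεr : ∀ k ∈ t, (t.card + a) * ε < r k / 4) {ρ : ℝ}
    (hρ : thickening ρ (closure Ω) ⊆ Ω ∪ ⋃ k ∈ t, ball k (r k / 2))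
    (hερ : (t.card + a) * ε < ρ) (hεB : (∑ k ∈ t, B k) * ε ≤ 1) :
    IsOutwardDeformation Ω μ (a / 2 * ε) ((t.card + a) * ε) ((∑ k ∈ t, B k) * ε) (∑ k ∈ t, β k)
      (pushOut ε t χ ν) := by
  have haε : 0 < a * ε := mul_pos hcov.aperture_pos hε
  have hderiv := norm_fderiv_pushOut_sub_id_le hε.le hcov.norm_axis hχ
  refine ⟨contDiff_pushOut hχ, fun x => ?_, ⟨a * ε / 4, by positivity, fun x hx => ?_⟩, hderiv,
    fun x hx => measureReal_ball_le_of_fderiv_pushOut_ne_id hχ hβ hx⟩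
  · linarith [norm_pushOut_sub_le hε.le hcov.norm_axis hχ subset_rfl x]
  · obtain ⟨y, hyx, hy⟩ := Set.not_subset.1 hx
    refine Set.disjoint_left.2 fun z hz hzΩ => ?_
    have hlip : LipschitzWith 2 (pushOut ε t χ ν) := lipschitzWith_two_of_norm_fderiv_sub_id_le
      ((contDiff_pushOut hχ).differentiable (by simp)) fun x => (hderiv x).trans hεB
    have hdist : dist (pushOut ε t χ ν x) (pushOut ε t χ ν y) ≤ 2 * dist x y := hlip.dist_le_mul x y
    have hzy : ‖z - pushOut ε t χ ν y‖ ≤ a * ε := by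
      rw [← dist_eq_norm]
      rw [mem_ball] at hz
      rw [mem_ball'] at hyx
      linarith [dist_triangle z (pushOut ε t χ ν x) (pushOut ε t χ ν y)]
    refine hcov.pushOut_add_notMem hε.le hχ hεr hρ hερ hy hzy ?_
    rwa [add_sub_cancel]

theorem eventually_mul_lt_nhdsGT_zero (K : ℝ) {ρ : ℝ} (hρ : 0 < ρ) :
    ∀ᶠ ε in 𝓝[>] (0 : ℝ), K * ε < ρ :=
  (Continuous.tendsto' (by fun_prop) 0 0 (mul_zero K) |>.mono_left nhdsWithin_le_nhds).eventually
    (gt_mem_nhds hρ)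

theorem OuterConeCover.exists_isOutwardDeformation [BorelSpace F] [ProperSpace F]
    (hcov : OuterConeCover Ω t r ν a) (hΩo : IsOpen Ω) (hΩb : Bornology.IsBounded Ω)
    (μ : Measure F) [IsFiniteMeasure μ] :
    ∃ c K B C : ℝ, 0 < c ∧ 0 < K ∧ 0 ≤ B ∧ 0 ≤ C ∧ ∀ᶠ ε in 𝓝[>] 0, ∃ Φ : F → F,
      IsOutwardDeformation Ω μ (c * ε) (K * ε) (B * ε) (C * ε) Φ := by
  have hK : 0 < t.card + a := by linarith [t.card.cast_nonneg (α := ℝ), hcov.aperture_pos]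
  have hcutoff : ∀ k ∈ t, _ :=
    fun k hk => eventually_exists_isLayeredCutoff μ k (hcov.radius_pos k hk) hK
  choose! B C hB hC hev using hcutoff
  have hcover : closure Ω ⊆ Ω ∪ ⋃ k ∈ t, ball k (r k / 2) := by
    rw [closure_eq_self_union_frontier]
    exact union_subset_union_right _ hcov.frontier_subset
  obtain ⟨ρ, hρ, hthick⟩ := hΩb.isCompact_closure.exists_thickening_subset_open
    (hΩo.union (isOpen_biUnion fun _ _ => isOpen_ball)) hcover
  refine ⟨a / 2, t.card + a, ∑ k ∈ t, B k, ∑ k ∈ t, C k, half_pos hcov.aperture_pos, hK,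
    Finset.sum_nonneg hB, Finset.sum_nonneg hC, ?_⟩
  filter_upwards [(eventually_all_finset t).2 hev, self_mem_nhdsWithin,
    eventually_mul_lt_nhdsGT_zero _ hρ, eventually_mul_lt_nhdsGT_zero (∑ k ∈ t, B k) one_pos,
    (eventually_all_finset t).2 fun k hk => eventually_mul_lt_nhdsGT_zero (t.card + a)
      (div_pos (hcov.radius_pos k hk) four_pos)] with ε hχ hε hερ hεB hεr
  choose! χ hχ using hχ
  have hε0 : 0 < ε := hε
  rw [Finset.sum_mul t C]
  exact ⟨_, hcov.isOutwardDeformation_pushOut hε0 hχ (fun k hk => mul_nonneg (hC k hk) hε0.le) hεr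
    hthick hερ hεB.le⟩

end OutwardDeformation

section AveragingKernels

variable {V : Type*} [MetricSpace V] [MeasurableSpace V]
  {E : Type*} [NormedAddCommGroup E] [NormedSpace ℝ E]

/-- The average `∫ k(x, y) f(y) dμ(y)` of `f` against the kernel `k`. -/
def kernelAvg (μ : Measure V) (k : V → V → ℝ) (f : V → E) (x : V) : E :=
  ∫ y, k x y • f y ∂μ

/-- `k` is a continuous Markov kernel density with respect to `μ`, bounded by `S` and with
`k x` supported in the ball of radius `R` around `x`. -/
structure IsAvgKernel (μ : Measure V) (k : V → V → ℝ) (S R : ℝ) : Prop where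
  nonneg : ∀ x y, 0 ≤ k x y
  continuous : Continuous (Function.uncurry k)
  lintegral_eq_one : ∀ x, ∫⁻ y, ENNReal.ofReal (k x y) ∂μ = 1
  le : ∀ x y, k x y ≤ S
  mem_ball : ∀ x y, k x y ≠ 0 → y ∈ ball x R

/-- A sequence of averaging kernels with ranges `R n → 0` which is bounded, uniformly in `n`, as a
family of operators on `L¹(μ)`: this is what the bound on `S n * μ (ball y (R n))` ensures. -/
structure IsAvgKernelSeq (μ : Measure V) (k : ℕ → V → V → ℝ) (S R : ℕ → ℝ) (C : ℝ≥0∞) :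
    Prop where
  isAvgKernel : ∀ n, IsAvgKernel μ (k n) (S n) (R n)
  tendsto_radius : Tendsto R atTop (𝓝 0)
  const_ne_top : C ≠ ⊤
  mul_measure_ball_le : ∀ n y, ENNReal.ofReal (S n) * μ (ball y (R n)) ≤ C

variable {μ : Measure V} {k : V → V → ℝ} {S R : ℝ}

namespace IsAvgKernel

theorem radius_pos [Nonempty V] (hk : IsAvgKernel μ k S R) : 0 < R := by
  by_contra! hR
  obtain ⟨x⟩ := ‹Nonempty V›
  have hk0 : ∀ y, k x y = 0 := fun y => by
    by_contra hxy
    simpa [ball_eq_empty.2 hR] using hk.mem_ball x y hxy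
  simpa [hk0] using hk.lintegral_eq_one x

theorem continuous_right (hk : IsAvgKernel μ k S R) (x : V) : Continuous (k x) :=
  hk.continuous.comp (by fun_prop : Continuous fun y : V => (x, y))

theorem ofReal_le_indicator (hk : IsAvgKernel μ k S R) (x y : V) :
    ENNReal.ofReal (k x y) ≤ (ball x R).indicator (fun _ => ENNReal.ofReal S) y := by
  by_cases hy : y ∈ ball x R
  · simpa [hy] using ENNReal.ofReal_le_ofReal (hk.le x y)
  · simp [not_imp_comm.1 (hk.mem_ball x y) hy]

variable [BorelSpace V]

theorem integral_eq_one (hk : IsAvgKernel μ k S R) (x : V) : ∫ y, k x y ∂μ = 1 := by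
  rw [integral_eq_lintegral_of_nonneg_ae (ae_of_all _ (hk.nonneg x))
    (hk.continuous_right x).measurable.aestronglyMeasurable, hk.lintegral_eq_one x,
    ENNReal.toReal_one]

theorem integrable (hk : IsAvgKernel μ k S R) (x : V) : Integrable (k x) μ :=
  .of_integral_ne_zero (by simp [hk.integral_eq_one x])

theorem setIntegral_le_one (hk : IsAvgKernel μ k S R) (A : Set V) (x : V) :
    ∫ y in A, k x y ∂μ ≤ 1 :=
  (setIntegral_le_integral (hk.integrable x) (ae_of_all _ (hk.nonneg x))).trans_eq
    (hk.integral_eq_one x)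

theorem norm_setIntegral_smul_le (hk : IsAvgKernel μ k S R) {A : Set V} (hA : MeasurableSet A)
    {h : V → E} {x : V} {ω : ℝ} (hω : ∀ y ∈ ball x R ∩ A, ‖h y‖ ≤ ω) (hω0 : 0 ≤ ω) :
    ‖∫ y in A, k x y • h y ∂μ‖ ≤ ω := by
  calc ‖∫ y in A, k x y • h y ∂μ‖ ≤ ∫ y in A, k x y * ω ∂μ := by
        refine norm_integral_le_of_norm_le ((hk.integrable x).integrableOn.mul_const ω)
          (ae_restrict_of_forall_mem hA fun y hy => ?_)
        rw [norm_smul, Real.norm_of_nonneg (hk.nonneg x y)]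
        rcases eq_or_ne (k x y) 0 with h0 | h0
        · simp [h0]
        · exact mul_le_mul_of_nonneg_left (hω y ⟨hk.mem_ball x y h0, hy⟩) (hk.nonneg x y)
    _ ≤ ω := by
        rw [integral_mul_const]
        exact mul_le_of_le_one_left hω0 (hk.setIntegral_le_one A x)

theorem enorm_kernelAvg_rpow_le (hk : IsAvgKernel μ k S R) {f : V → E}
    (hf : AEStronglyMeasurable f μ) {p : ℝ} (hp : 1 ≤ p) (x : V) :
    ‖kernelAvg μ k f x‖ₑ ^ p ≤ ∫⁻ y, ENNReal.ofReal (k x y) * ‖f y‖ₑ ^ p ∂μ := by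
  have hp0 : 0 < p := by linarith
  have hm : AEMeasurable (fun y => ENNReal.ofReal (k x y)) μ :=
    (hk.continuous_right x).measurable.ennreal_ofReal.aemeasurable
  set ν := μ.withDensity (fun y => ENNReal.ofReal (k x y)) with hν
  have : IsProbabilityMeasure ν :=
    ⟨by rw [hν, withDensity_apply _ .univ, Measure.restrict_univ, hk.lintegral_eq_one x]⟩
  have avg_le : ‖kernelAvg μ k f x‖ₑ ≤ eLpNorm f 1 ν := by
    refine (enorm_integral_le_lintegral_enorm _).trans_eq ?_
    rw [eLpNorm_one_eq_lintegral_enorm, hν, lintegral_withDensity_eq_lintegral_mul₀ hm hf.enorm]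
    simp [enorm_smul, Real.enorm_of_nonneg (hk.nonneg x _)]
  have one_le_p : eLpNorm f 1 ν ≤ eLpNorm f (ENNReal.ofReal p) ν :=
    eLpNorm_le_eLpNorm_of_exponent_le (ENNReal.one_le_ofReal.2 hp)
      (hf.mono_ac (withDensity_absolutelyContinuous _ _))
  calc ‖kernelAvg μ k f x‖ₑ ^ p ≤ eLpNorm f (ENNReal.ofReal p) ν ^ p := by
        gcongr; exact avg_le.trans one_le_p
    _ = ∫⁻ y, ENNReal.ofReal (k x y) * ‖f y‖ₑ ^ p ∂μ := by
        rw [eLpNorm_eq_lintegral_rpow_enorm_toReal (by simpa using hp0) ENNReal.ofReal_ne_top,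
          ENNReal.toReal_ofReal hp0.le, ← ENNReal.rpow_mul, one_div, inv_mul_cancel₀ hp0.ne',
          ENNReal.rpow_one, hν,
          lintegral_withDensity_eq_lintegral_mul₀ hm (hf.enorm.pow_const p)]
        rfl

theorem enorm_kernelAvg_rpow_le_mul_setLIntegral (hk : IsAvgKernel μ k S R) {f : V → E}
    (hf : AEStronglyMeasurable f μ) {p : ℝ} (hp : 1 ≤ p) (x : V) :
    ‖kernelAvg μ k f x‖ₑ ^ p ≤ ENNReal.ofReal S * ∫⁻ y in ball x R, ‖f y‖ₑ ^ p ∂μ := by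
  refine (hk.enorm_kernelAvg_rpow_le hf hp x).trans ?_
  rw [← lintegral_const_mul' _ _ ENNReal.ofReal_ne_top, ← lintegral_indicator measurableSet_ball]
  gcongr with y
  refine (mul_le_mul_left (hk.ofReal_le_indicator x y) _).trans_eq ?_
  by_cases hy : y ∈ ball x R <;> simp [hy]

theorem lintegral_left_le (hk : IsAvgKernel μ k S R) (y : V) :
    ∫⁻ x, ENNReal.ofReal (k x y) ∂μ ≤ ENNReal.ofReal S * μ (ball y R) := by
  rw [← setLIntegral_const, ← lintegral_indicator measurableSet_ball]
  refine lintegral_mono fun x => (hk.ofReal_le_indicator x y).trans_eq ?_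
  by_cases hxy : y ∈ ball x R
  · simp [hxy, mem_ball_comm.1 hxy]
  · simp [hxy, mt mem_ball_comm.1 hxy]

variable [ProperSpace V]

theorem integrable_smul (hk : IsAvgKernel μ k S R) {f : V → E} (hf : LocallyIntegrable f μ)
    (x : V) : Integrable (fun y => k x y • f y) μ := by
  rw [← integrableOn_iff_integrable_of_support_subset (s := closedBall x R)]
  · refine (hf.integrableOn_isCompact (isCompact_closedBall x R)).bdd_smul S
      (hk.continuous_right x).aestronglyMeasurable (ae_of_all _ fun y => ?_)
    rw [Real.norm_of_nonneg (hk.nonneg x y)]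
    exact hk.le x y
  · intro y hy
    exact ball_subset_closedBall (hk.mem_ball x y fun h => hy (by simp [h]))

theorem kernelAvg_sub (hk : IsAvgKernel μ k S R) {f h : V → E} (hf : LocallyIntegrable f μ)
    (hh : LocallyIntegrable h μ) :
    kernelAvg μ k (f - h) = kernelAvg μ k f - kernelAvg μ k h := by
  funext x
  simp only [kernelAvg, Pi.sub_apply, smul_sub]
  exact integral_sub (hk.integrable_smul hf x) (hk.integrable_smul hh x)

theorem norm_kernelAvg_sub_le [CompleteSpace E] (hk : IsAvgKernel μ k S R) {h : V → E}
    (hh : LocallyIntegrable h μ) {x : V} {v : E} {ω : ℝ} (hω : ∀ y ∈ ball x R, ‖h y - v‖ ≤ ω) :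
    ‖kernelAvg μ k h x - v‖ ≤ ω := by
  have avg_sub : kernelAvg μ k h x - v = ∫ y, k x y • (h y - v) ∂μ := by
    simp only [smul_sub]
    rw [integral_sub (hk.integrable_smul hh x) ((hk.integrable x).smul_const v),
      integral_smul_const, hk.integral_eq_one, one_smul, kernelAvg]
  rw [avg_sub]
  have : Nonempty V := ⟨x⟩
  simpa using hk.norm_setIntegral_smul_le .univ (fun y hy => hω y hy.1)
    ((norm_nonneg _).trans (hω x (mem_ball_self hk.radius_pos)))

variable [SFinite μ]

theorem aestronglyMeasurable_kernelAvg (hk : IsAvgKernel μ k S R) {f : V → E}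
    (hf : AEStronglyMeasurable f μ) : AEStronglyMeasurable (kernelAvg μ k f) μ := by
  have : AEStronglyMeasurable (fun z : V × V => k z.1 z.2 • f z.2) (μ.prod μ) :=
    hk.continuous.aestronglyMeasurable.smul hf.comp_snd
  exact this.integral_prod_right'

theorem eLpNorm_kernelAvg_le (hk : IsAvgKernel μ k S R) {f : V → E} (hf : AEStronglyMeasurable f μ)
    {p : ℝ} (hp : 1 ≤ p) {C : ℝ≥0∞} (hC : ∀ y, ENNReal.ofReal S * μ (ball y R) ≤ C) :
    eLpNorm (kernelAvg μ k f) (ENNReal.ofReal p) μ ≤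
      C ^ (1 / p) * eLpNorm f (ENNReal.ofReal p) μ := by
  have hp0 : 0 < p := by linarith
  have hm : Measurable (Function.uncurry fun x y => ENNReal.ofReal (k x y)) :=
    hk.continuous.measurable.ennreal_ofReal
  simp only [eLpNorm_eq_lintegral_rpow_enorm_toReal (by simpa using hp0) ENNReal.ofReal_ne_top,
    ENNReal.toReal_ofReal hp0.le]
  rw [← ENNReal.mul_rpow_of_nonneg _ _ (by positivity)]
  gcongr ?_ ^ (1 / p)
  calc ∫⁻ x, ‖kernelAvg μ k f x‖ₑ ^ p ∂μ
      ≤ ∫⁻ x, ∫⁻ y, ENNReal.ofReal (k x y) * ‖f y‖ₑ ^ p ∂μ ∂μ :=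
        lintegral_mono fun x => hk.enorm_kernelAvg_rpow_le hf hp x
    _ = ∫⁻ y, ∫⁻ x, ENNReal.ofReal (k x y) * ‖f y‖ₑ ^ p ∂μ ∂μ :=
        lintegral_lintegral_swap (hm.aemeasurable.mul (hf.enorm.pow_const p).comp_snd)
    _ ≤ ∫⁻ y, C * ‖f y‖ₑ ^ p ∂μ := by
        refine lintegral_mono fun y => ?_
        dsimp only
        rw [lintegral_mul_const _ (f := fun x => ENNReal.ofReal (k x y))
          (hm.comp (by fun_prop : Measurable fun x : V => (x, y)))]
        gcongr
        exact (hk.lintegral_left_le y).trans (hC y)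
    _ = C * ∫⁻ y, ‖f y‖ₑ ^ p ∂μ := lintegral_const_mul'' _ (hf.enorm.pow_const p)

theorem eLpNorm_kernelAvg_sub_le [IsLocallyFiniteMeasure μ] (hk : IsAvgKernel μ k S R) {C : ℝ≥0∞}
    (hC : ∀ y, ENNReal.ofReal S * μ (ball y R) ≤ C) {p : ℝ} (hp : 1 ≤ p) {f h : V → E}
    (hf : MemLp f (ENNReal.ofReal p) μ) (hh : MemLp h (ENNReal.ofReal p) μ) (Ω : Set V) :
    eLpNorm (kernelAvg μ k f - f) (ENNReal.ofReal p) (μ.restrict Ω) ≤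
      (C ^ (1 / p) + 1) * eLpNorm (f - h) (ENNReal.ofReal p) μ +
        eLpNorm (kernelAvg μ k h - h) (ENNReal.ofReal p) (μ.restrict Ω) := by
  have hp1 : 1 ≤ ENNReal.ofReal p := ENNReal.one_le_ofReal.2 hp
  have hfh : AEStronglyMeasurable (f - h) μ := hf.1.sub hh.1
  have hhf : AEStronglyMeasurable (h - f) μ := hh.1.sub hf.1
  have havg := hk.aestronglyMeasurable_kernelAvg hfh
  have split : kernelAvg μ k f - f =
      (kernelAvg μ k (f - h) + (h - f)) + (kernelAvg μ k h - h) := by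
    rw [hk.kernelAvg_sub (hf.locallyIntegrable hp1) (hh.locallyIntegrable hp1)]
    abel
  rw [split]
  refine (eLpNorm_add_le (havg.add hhf).restrict
    ((hk.aestronglyMeasurable_kernelAvg hh.1).sub hh.1).restrict hp1).trans ?_
  gcongr ?_ + _
  calc eLpNorm (kernelAvg μ k (f - h) + (h - f)) (ENNReal.ofReal p) (μ.restrict Ω)
      ≤ eLpNorm (kernelAvg μ k (f - h) + (h - f)) (ENNReal.ofReal p) μ :=
        eLpNorm_mono_measure _ Measure.restrict_le_self
    _ ≤ eLpNorm (kernelAvg μ k (f - h)) (ENNReal.ofReal p) μ +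
          eLpNorm (h - f) (ENNReal.ofReal p) μ := eLpNorm_add_le havg hhf hp1
    _ ≤ (C ^ (1 / p) + 1) * eLpNorm (f - h) (ENNReal.ofReal p) μ := by
        rw [add_mul, one_mul, eLpNorm_sub_comm h f]
        gcongr
        exact hk.eLpNorm_kernelAvg_le hfh hp hC

end IsAvgKernel

theorem tendsto_eLpNorm_zero_of_tendstoUniformly {α ι G : Type*} [MeasurableSpace α]
    [NormedAddCommGroup G] {ν : Measure α} [IsFiniteMeasure ν] {l : Filter ι} {F : ι → α → G}
    (hF : TendstoUniformly F 0 l) (p : ℝ≥0∞) :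
    Tendsto (fun n => eLpNorm (F n) p ν) l (𝓝 0) := by
  set A := ν univ ^ p.toReal⁻¹
  have hAt : A ≠ ⊤ := ENNReal.rpow_ne_top_of_nonneg (by positivity) (measure_ne_top _ _)
  have bound_tendsto : Tendsto (fun ω : ℝ => A * ENNReal.ofReal ω) (𝓝[>] 0) (𝓝 0) := by
    have : Tendsto ENNReal.ofReal (𝓝[>] 0) (𝓝 0) := by
      simpa using (ENNReal.continuous_ofReal.tendsto 0).mono_left nhdsWithin_le_nhds
    simpa using ENNReal.Tendsto.const_mul this (.inr hAt)
  rw [ENNReal.tendsto_nhds_zero]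
  intro η hη
  obtain ⟨ω, hωη, hω⟩ :=
    ((bound_tendsto.eventually (ge_mem_nhds hη)).and self_mem_nhdsWithin).exists
  filter_upwards [Metric.tendstoUniformly_iff.1 hF ω hω] with n hn
  refine (eLpNorm_le_of_ae_bound (ae_of_all _ fun x => ?_)).trans hωη
  simpa using (hn x).le

namespace IsAvgKernelSeq

variable [BorelSpace V] [ProperSpace V] [IsLocallyFiniteMeasure μ] [CompleteSpace E]
  {k : ℕ → V → V → ℝ} {S R : ℕ → ℝ} {C : ℝ≥0∞}

theorem tendstoUniformly_kernelAvg_sub (hk : IsAvgKernelSeq μ k S R C) {h : V → E}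
    (hh : UniformContinuous h) :
    TendstoUniformly (fun n => kernelAvg μ (k n) h - h) 0 atTop := by
  refine Metric.tendstoUniformly_iff.2 fun ω hω => ?_
  obtain ⟨δ, hδ, hδω⟩ := Metric.uniformContinuous_iff.1 hh (ω / 2) (half_pos hω)
  filter_upwards [hk.tendsto_radius.eventually (gt_mem_nhds hδ)] with n hn x
  simp only [Pi.zero_apply, Pi.sub_apply, dist_zero_left]
  refine ((hk.isAvgKernel n).norm_kernelAvg_sub_le hh.continuous.locallyIntegrable
    (fun y hy => ?_)).trans_lt (half_lt_self hω)
  rw [← dist_eq_norm]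
  exact (hδω ((mem_ball.1 hy).trans hn)).le

theorem tendsto_eLpNorm_kernelAvg_sub (hk : IsAvgKernelSeq μ k S R C) {p : ℝ} (hp : 1 ≤ p)
    {f : V → E} (hf : MemLp f (ENNReal.ofReal p) μ) {Ω : Set V} (hΩ : μ Ω ≠ ⊤) :
    Tendsto (fun n => eLpNorm (kernelAvg μ (k n) f - f) (ENNReal.ofReal p) (μ.restrict Ω))
      atTop (𝓝 0) := by
  have : IsFiniteMeasure (μ.restrict Ω) := isFiniteMeasure_restrict.2 hΩ
  rw [ENNReal.tendsto_nhds_zero]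
  intro η hη
  set D := C ^ (1 / p) + 1 with hD
  have hDt : D ≠ ⊤ := ENNReal.add_ne_top.2
    ⟨ENNReal.rpow_ne_top_of_nonneg (by positivity) hk.const_ne_top, ENNReal.one_ne_top⟩
  obtain ⟨h, hhs, hhf, hhc, hhm⟩ := hf.exists_hasCompactSupport_eLpNorm_sub_le
    ENNReal.ofReal_ne_top (ENNReal.div_pos (ENNReal.half_pos hη.ne').ne' hDt).ne'
  have avg_h := tendsto_eLpNorm_zero_of_tendstoUniformly (ν := μ.restrict Ω)
    (hk.tendstoUniformly_kernelAvg_sub (hhs.uniformContinuous_of_continuous hhc))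
    (ENNReal.ofReal p)
  filter_upwards [avg_h.eventually (ge_mem_nhds (ENNReal.half_pos hη.ne'))] with n hn
  calc eLpNorm (kernelAvg μ (k n) f - f) (ENNReal.ofReal p) (μ.restrict Ω)
      ≤ D * eLpNorm (f - h) (ENNReal.ofReal p) μ +
          eLpNorm (kernelAvg μ (k n) h - h) (ENNReal.ofReal p) (μ.restrict Ω) :=
        (hk.isAvgKernel n).eLpNorm_kernelAvg_sub_le (hk.mul_measure_ball_le n) hp hf hhm Ω
    _ ≤ D * (η / 2 / D) + η / 2 := by gcongr
    _ = η := by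
        rw [ENNReal.mul_div_cancel (by simp [hD]) hDt, ENNReal.add_halves]

end IsAvgKernelSeq

end AveragingKernels

section SobolevApproximation

variable {d m : ℕ} {Ω : Set (Euc d)}

theorem smoothJac_apply {w : Euc d → Euc m} {x : Euc d} (hw : DifferentiableAt ℝ w x) (i : Fin m)
    (j : Fin d) :
    smoothJac w x i j = fderiv ℝ (fun y => w y i) x (EuclideanSpace.single j 1) := by
  have hwi := ((EuclideanSpace.proj (𝕜 := ℝ) i).hasFDerivAt.comp x hw.hasFDerivAt).fderiv
  exact (congrArg (· (EuclideanSpace.single j 1)) hwi).symm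

theorem continuous_smoothJac {w : Euc d → Euc m} (hw : ContDiff ℝ 1 w) :
    Continuous (smoothJac w) := by
  refine continuous_pi fun i => continuous_pi fun j => ?_
  exact (EuclideanSpace.proj (𝕜 := ℝ) i).continuous.comp
    ((hw.continuous_fderiv one_ne_zero).clm_apply continuous_const)

theorem support_smoothJac_subset (w : Euc d → Euc m) :
    Function.support (smoothJac w) ⊆ tsupport w := by
  refine (Function.support_subset_iff'.2 fun x hx => ?_ :
    Function.support (smoothJac w) ⊆ Function.support (fderiv ℝ w)).trans
    (support_fderiv_subset ℝ)
  ext i j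
  simp [smoothJac, Function.notMem_support.1 hx]

theorem IsCcSmooth.contDiff_one {w : Euc d → Euc m} (hw : IsCcSmooth Ω w) : ContDiff ℝ 1 w :=
  hw.1.of_le (by norm_cast)

theorem IsCcSmooth.memLp {w : Euc d → Euc m} (hw : IsCcSmooth Ω w) (p : ℝ≥0∞) :
    MemLp w p (volume.restrict Ω) :=
  (hw.1.continuous.memLp_of_hasCompactSupport hw.2.1).restrict _

theorem IsCcSmooth.memLp_smoothJac {w : Euc d → Euc m} (hw : IsCcSmooth Ω w) (p : ℝ≥0∞) :
    MemLp (smoothJac w) p (volume.restrict Ω) :=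
  ((continuous_smoothJac hw.contDiff_one).memLp_of_hasCompactSupport
    (hw.2.1.mono' (support_smoothJac_subset w))).restrict _

theorem IsCcSmooth.setIntegral_mul_fderiv {w : Euc d → Euc m} (hw : IsCcSmooth Ω w)
    {φ : Euc d → ℝ} (hφ : ContDiff ℝ 1 φ) (i : Fin m) (j : Fin d) :
    ∫ x in Ω, w x i * fderiv ℝ φ x (EuclideanSpace.single j 1) =
      -∫ x in Ω, smoothJac w x i j * φ x := by
  have hw1 := hw.contDiff_one
  have hwi : ContDiff ℝ 1 (fun x => w x i) := by fun_prop
  have hs : HasCompactSupport (fun x => w x i) :=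
    hw.2.1.comp_left (g := fun z : Euc m => z i) rfl
  have hwc : Continuous (fun x => fderiv ℝ (fun x => w x i) x (EuclideanSpace.single j 1)) :=
    (hwi.continuous_fderiv one_ne_zero).clm_apply continuous_const
  have hφc : Continuous (fun x => fderiv ℝ φ x (EuclideanSpace.single j 1)) :=
    (hφ.continuous_fderiv one_ne_zero).clm_apply continuous_const
  have w_eq_zero : ∀ x ∉ Ω, w x = 0 :=
    fun x hx => image_eq_zero_of_notMem_tsupport fun h => hx (hw.2.2 h)
  have jac_eq_zero : ∀ x ∉ Ω, smoothJac w x = 0 := fun x hx =>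
    Function.notMem_support.1 fun h => hx (hw.2.2 (support_smoothJac_subset w h))
  rw [setIntegral_eq_integral_of_forall_compl_eq_zero fun x hx => by simp [w_eq_zero x hx],
    setIntegral_eq_integral_of_forall_compl_eq_zero fun x hx => by simp [jac_eq_zero x hx]]
  simp_rw [smoothJac_apply (hw1.differentiable one_ne_zero _)]
  refine integral_mul_fderiv_eq_neg_fderiv_mul_of_integrable ?_ ?_ ?_
    (fun x _ => hwi.differentiable one_ne_zero x) (fun x _ => hφ.differentiable one_ne_zero x)
  · exact (hwc.mul hφ.continuous).integrable_of_hasCompactSupport (hs.fderiv_apply ℝ _).mul_right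
  · exact (hwi.continuous.mul hφc).integrable_of_hasCompactSupport hs.mul_right
  · exact (hwi.continuous.mul hφ.continuous).integrable_of_hasCompactSupport hs.mul_right

theorem IsCcSmooth.memW1p0 {w : Euc d → Euc m} (hw : IsCcSmooth Ω w) (p : ℝ≥0∞) :
    MemW1p0 Ω p w (smoothJac w) :=
  ⟨⟨hw.memLp p, hw.memLp_smoothJac p,
    fun _ hφ _ _ i j => hw.setIntegral_mul_fderiv (hφ.of_le (by norm_cast)) i j⟩,
    fun _ => w, fun _ => hw, by simp, by simp⟩

theorem tendsto_eLpNorm_one_of_tendsto_eLpNorm {α E ι : Type*} [MeasurableSpace α]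
    [NormedAddCommGroup E] {μ : Measure α} [IsFiniteMeasure μ] {p : ℝ≥0∞} (hp : 1 ≤ p)
    {l : Filter ι} {f : ι → α → E} (hf : ∀ n, AEStronglyMeasurable (f n) μ)
    (h : Tendsto (fun n => eLpNorm (f n) p μ) l (𝓝 0)) :
    Tendsto (fun n => eLpNorm (f n) 1 μ) l (𝓝 0) := by
  have exponent_nonneg : 0 ≤ 1 / (1 : ℝ≥0∞).toReal - 1 / p.toReal := by
    rcases eq_or_ne p ⊤ with rfl | hpt
    · simp
    · have : 1 ≤ p.toReal := by simpa using ENNReal.toReal_mono hpt hp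
      simpa using inv_le_one_of_one_le₀ this
  have bound_tendsto := ENNReal.Tendsto.mul_const h
    (.inr (ENNReal.rpow_ne_top_of_nonneg exponent_nonneg (measure_ne_top μ univ)))
  rw [zero_mul] at bound_tendsto
  exact tendsto_of_tendsto_of_tendsto_of_le_of_le tendsto_const_nhds bound_tendsto
    (fun _ => zero_le) fun n => eLpNorm_le_eLpNorm_mul_rpow_measure_univ hp (hf n)

theorem tendsto_integral_mul_of_tendsto_eLpNorm {α ι : Type*} [MeasurableSpace α] {μ : Measure α}
    [IsFiniteMeasure μ] {p : ℝ≥0∞} (hp : 1 ≤ p) {l : Filter ι} {f : ι → α → ℝ} {f₀ ψ : α → ℝ}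
    (hf : ∀ n, MemLp (f n) p μ) (hf₀ : MemLp f₀ p μ)
    (h : Tendsto (fun n => eLpNorm (f n - f₀) p μ) l (𝓝 0))
    (hψ : AEStronglyMeasurable ψ μ) {C : ℝ} (hC : ∀ x, ‖ψ x‖ ≤ C) :
    Tendsto (fun n => ∫ x, f n x * ψ x ∂μ) l (𝓝 (∫ x, f₀ x * ψ x ∂μ)) := by
  have integrable_mul : ∀ {u : α → ℝ}, MemLp u p μ → Integrable (fun x => u x * ψ x) μ :=
    fun hu => (hu.integrable hp).mul_bdd (c := C) hψ (ae_of_all _ hC)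
  refine tendsto_integral_of_L1' _ (integrable_mul hf₀).1
    (Eventually.of_forall fun n => integrable_mul (hf n)) ?_
  have bound_tendsto := ENNReal.Tendsto.const_mul (a := ENNReal.ofReal C)
    (tendsto_eLpNorm_one_of_tendsto_eLpNorm hp (fun n => (hf n).1.sub hf₀.1) h)
    (.inr ENNReal.ofReal_ne_top)
  rw [mul_zero] at bound_tendsto
  refine tendsto_of_tendsto_of_tendsto_of_le_of_le tendsto_const_nhds bound_tendsto
    (fun _ => zero_le) fun n => eLpNorm_le_mul_eLpNorm_of_ae_le_mul (ae_of_all _ fun x => ?_) 1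
  rw [Pi.sub_apply, ← sub_mul, norm_mul, mul_comm]
  exact mul_le_mul_of_nonneg_right (hC x) (norm_nonneg _)

theorem norm_apply_apply_le (ξ : Mat m d) (i : Fin m) (j : Fin d) : ‖ξ i j‖ ≤ ‖ξ‖ :=
  (norm_le_pi_norm (ξ i) j).trans (norm_le_pi_norm ξ i)

theorem memLp_apply {α : Type*} [MeasurableSpace α] {μ : Measure α} {p : ℝ≥0∞} {u : α → Euc m}
    (hu : MemLp u p μ) (i : Fin m) : MemLp (fun x => u x i) p μ :=
  (EuclideanSpace.proj (𝕜 := ℝ) i).comp_memLp' hu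

theorem memLp_apply_apply {α : Type*} [MeasurableSpace α] {μ : Measure α} {p : ℝ≥0∞}
    {u : α → Mat m d} (hu : MemLp u p μ) (i : Fin m) (j : Fin d) :
    MemLp (fun x => u x i j) p μ :=
  hu.of_le ((by fun_prop : Continuous fun ξ : Mat m d => ξ i j).comp_aestronglyMeasurable hu.1)
    (ae_of_all _ fun x => norm_apply_apply_le (u x) i j)

/-- For `v ∈ W₀^{1,p}(Ω)` the test function need not vanish near the boundary of `Ω`. -/
theorem MemW1p0.setIntegral_mul_fderiv [IsFiniteMeasure (volume.restrict Ω)] {p : ℝ≥0∞}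
    (hp : 1 ≤ p) {v : Euc d → Euc m} {Dv : Euc d → Mat m d} (hv : MemW1p0 Ω p v Dv)
    {φ : Euc d → ℝ} (hφ : ContDiff ℝ 1 φ) (hφc : HasCompactSupport φ) (i : Fin m) (j : Fin d) :
    ∫ x in Ω, v x i * fderiv ℝ φ x (EuclideanSpace.single j 1) =
      -∫ x in Ω, Dv x i j * φ x := by
  obtain ⟨⟨hv_mem, hDv_mem, -⟩, w, hw, hwv, hwDv⟩ := hv
  have hφ' : Continuous (fun x => fderiv ℝ φ x (EuclideanSpace.single j 1)) :=
    (hφ.continuous_fderiv one_ne_zero).clm_apply continuous_const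
  obtain ⟨C, hC⟩ := hφ.continuous.bounded_above_of_compact_support hφc
  obtain ⟨C', hC'⟩ := hφ'.bounded_above_of_compact_support (hφc.fderiv_apply ℝ _)
  have left_tendsto := tendsto_integral_mul_of_tendsto_eLpNorm hp
    (fun n => memLp_apply ((hw n).memLp p) i) (memLp_apply hv_mem i)
    (tendsto_of_tendsto_of_tendsto_of_le_of_le tendsto_const_nhds hwv (fun _ => zero_le)
      fun n => eLpNorm_mono fun x => PiLp.norm_apply_le ((w n - v) x) i)
    hφ'.aestronglyMeasurable hC'
  have right_tendsto := tendsto_integral_mul_of_tendsto_eLpNorm hp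
    (fun n => memLp_apply_apply ((hw n).memLp_smoothJac p) i j) (memLp_apply_apply hDv_mem i j)
    (tendsto_of_tendsto_of_tendsto_of_le_of_le tendsto_const_nhds hwDv (fun _ => zero_le)
      fun n => eLpNorm_mono fun x => norm_apply_apply_le ((smoothJac (w n) - Dv) x) i j)
    hφ.continuous.aestronglyMeasurable hC
  exact tendsto_nhds_unique left_tendsto
    (right_tendsto.neg.congr fun n => ((hw n).setIntegral_mul_fderiv hφ i j).symm)

theorem kernelAvg_indicator {V E : Type*} [MeasurableSpace V] [NormedAddCommGroup E]
    [NormedSpace ℝ E] {μ : Measure V} {A : Set V} (hA : MeasurableSet A) (k : V → V → ℝ)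
    (f : V → E) (x : V) : kernelAvg μ k (A.indicator f) x = ∫ y in A, k x y • f y ∂μ := by
  rw [← integral_indicator hA]
  simp only [kernelAvg, indicator_smul]

theorem kernelAvg_sub_eq_convolution {F E : Type*} [NormedAddCommGroup F] [MeasurableSpace F]
    [NormedAddCommGroup E] [NormedSpace ℝ E] {μ : Measure F} {ρ : F → ℝ} {f : F → E} :
    kernelAvg μ (fun z y => ρ (z - y)) f =
      convolution f ρ (ContinuousLinearMap.lsmul ℝ ℝ).flip μ := by
  ext1 z
  simp [kernelAvg, convolution]

section Mollification

variable {F E : Type*} [NormedAddCommGroup F] [NormedSpace ℝ F] [MeasurableSpace F] [BorelSpace F]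
  [NormedAddCommGroup E] [NormedSpace ℝ E] {μ : Measure F} {ρ : F → ℝ} {f : F → E}

theorem contDiff_kernelAvg_sub (hρ : ContDiff ℝ (⊤ : ℕ∞) ρ) (hρc : HasCompactSupport ρ)
    (hf : LocallyIntegrable f μ) :
    ContDiff ℝ (⊤ : ℕ∞) (kernelAvg μ (fun z y => ρ (z - y)) f) := by
  rw [kernelAvg_sub_eq_convolution]
  exact hρc.contDiff_convolution_right _ hf hρ

theorem fderiv_kernelAvg_sub_apply [SFinite μ] [μ.IsAddLeftInvariant]
    (hρ : ContDiff ℝ 1 ρ) (hρc : HasCompactSupport ρ) (hf : LocallyIntegrable f μ) (z e : F) :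
    fderiv ℝ (kernelAvg μ (fun z y => ρ (z - y)) f) z e =
      kernelAvg μ (fun z y => fderiv ℝ ρ (z - y) e) f z := by
  have apply_eq := convolution_precompR_apply (ContinuousLinearMap.lsmul ℝ ℝ).flip hf
    (hρc.fderiv ℝ) (hρ.continuous_fderiv one_ne_zero) z e
  have hasFDerivAt := hρc.hasFDerivAt_convolution_right
    ((ContinuousLinearMap.lsmul ℝ ℝ).flip : E →L[ℝ] ℝ →L[ℝ] E) hf hρ z
  rw [kernelAvg_sub_eq_convolution, hasFDerivAt.fderiv, apply_eq, ← kernelAvg_sub_eq_convolution]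

end Mollification

theorem fderiv_comp_sub_left_apply {F : Type*} [NormedAddCommGroup F] [NormedSpace ℝ F] {ρ : F → ℝ}
    (hρ : Differentiable ℝ ρ) (z y e : F) :
    fderiv ℝ (fun y => ρ (z - y)) y e = -fderiv ℝ ρ (z - y) e := by
  have h := ((hρ (z - y)).hasFDerivAt.comp y ((hasFDerivAt_id y).const_sub z)).fderiv
  exact (congrArg (· e) h).trans (by simp : _ = -fderiv ℝ ρ (z - y) e)

theorem MemW1p0.smoothJac_kernelAvg_sub [IsFiniteMeasure (volume.restrict Ω)]
    (hΩ : MeasurableSet Ω) {p : ℝ≥0∞} (hp : 1 ≤ p) {v : Euc d → Euc m} {Dv : Euc d → Mat m d}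
    (hv : MemW1p0 Ω p v Dv) {ρ : Euc d → ℝ} (hρ : ContDiff ℝ 1 ρ) (hρc : HasCompactSupport ρ)
    (z : Euc d) :
    smoothJac (kernelAvg volume (fun z y => ρ (z - y)) (Ω.indicator v)) z =
      kernelAvg volume (fun z y => ρ (z - y)) (Ω.indicator Dv) z := by
  have hv_int : Integrable v (volume.restrict Ω) := hv.1.1.integrable hp
  have hDv_int : Integrable Dv (volume.restrict Ω) := hv.1.2.1.integrable hp
  have hφ : ContDiff ℝ 1 (fun y => ρ (z - y)) := hρ.comp (by fun_prop)
  have hφc : HasCompactSupport (fun y => ρ (z - y)) :=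
    hρc.comp_homeomorph (Homeomorph.subLeft z)
  obtain ⟨C, hC⟩ := hφ.continuous.bounded_above_of_compact_support hφc
  ext i j
  have hρ' : Continuous (fun y => fderiv ℝ ρ (z - y) (EuclideanSpace.single j 1)) :=
    ((hρ.continuous_fderiv one_ne_zero).comp (by fun_prop)).clm_apply continuous_const
  obtain ⟨C', hC'⟩ := ((hρ.continuous_fderiv one_ne_zero).clm_apply
    continuous_const).bounded_above_of_compact_support
      (hρc.fderiv_apply ℝ (EuclideanSpace.single j 1))
  have left_int : Integrable (fun y => fderiv ℝ ρ (z - y) (EuclideanSpace.single j 1) • v y)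
      (volume.restrict Ω) :=
    hv_int.bdd_smul C' hρ'.aestronglyMeasurable (ae_of_all _ fun y => hC' _)
  have right_int : Integrable (fun y => ρ (z - y) • Dv y) (volume.restrict Ω) :=
    hDv_int.bdd_smul C hφ.continuous.aestronglyMeasurable (ae_of_all _ hC)
  have parts := hv.setIntegral_mul_fderiv hp hφ hφc i j
  simp only [fderiv_comp_sub_left_apply (hρ.differentiable one_ne_zero), mul_neg, integral_neg,
    neg_inj] at parts
  calc smoothJac (kernelAvg volume (fun z y => ρ (z - y)) (Ω.indicator v)) z i j
      = (∫ y in Ω, fderiv ℝ ρ (z - y) (EuclideanSpace.single j 1) • v y) i := by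
        rw [smoothJac, fderiv_kernelAvg_sub_apply hρ hρc
          ((integrable_indicator_iff hΩ).2 hv_int).locallyIntegrable, kernelAvg_indicator hΩ]
    _ = ∫ y in Ω, v y i * fderiv ℝ ρ (z - y) (EuclideanSpace.single j 1) := by
        rw [eval_integral_piLp fun i =>
          (EuclideanSpace.proj (𝕜 := ℝ) i).integrable_comp left_int]
        simp [mul_comm]
    _ = ∫ y in Ω, Dv y i j * ρ (z - y) := parts
    _ = kernelAvg volume (fun z y => ρ (z - y)) (Ω.indicator Dv) z i j := by
        rw [kernelAvg_indicator hΩ, eval_integral fun i => right_int.eval i,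
          eval_integral fun j => (right_int.eval i).eval j]
        simp [mul_comm]

theorem norm_smoothJac_comp_sub_le {h : Euc d → Euc m} {Φ : Euc d → Euc d} {x : Euc d}
    (hh : DifferentiableAt ℝ h (Φ x)) (hΦ : DifferentiableAt ℝ Φ x) :
    ‖smoothJac (h ∘ Φ) x - smoothJac h (Φ x)‖ ≤
      d * ‖fderiv ℝ Φ x - ContinuousLinearMap.id ℝ (Euc d)‖ * ‖smoothJac h (Φ x)‖ := by
  refine (pi_norm_le_iff_of_nonneg (by positivity)).2 fun i =>
    (pi_norm_le_iff_of_nonneg (by positivity)).2 fun j => ?_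
  set T := fderiv ℝ Φ x - ContinuousLinearMap.id ℝ (Euc d) with hT
  set w := T (EuclideanSpace.single j 1) with hw
  have hwT : ‖w‖ ≤ ‖T‖ := by simpa using T.le_opNorm (EuclideanSpace.single j 1)
  have w_eq_sum : w = ∑ l, w l • EuclideanSpace.single l (1 : ℝ) := by
    ext a
    simp [Finset.sum_apply, Pi.single_apply]
  have chain : (smoothJac (h ∘ Φ) x - smoothJac h (Φ x)) i j =
      ∑ l, w l * smoothJac h (Φ x) i l := by
    have : (smoothJac (h ∘ Φ) x - smoothJac h (Φ x)) i j = (fderiv ℝ h (Φ x) w) i := by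
      simp [smoothJac, fderiv_comp x hh hΦ, hw, hT]
    rw [this, w_eq_sum, map_sum]
    simp [smoothJac, Pi.single_apply]
  rw [chain]
  calc ‖∑ l, w l * smoothJac h (Φ x) i l‖ ≤ ∑ _l : Fin d, ‖T‖ * ‖smoothJac h (Φ x)‖ := by
        refine norm_sum_le_of_le _ fun l _ => ?_
        rw [norm_mul]
        gcongr
        · exact (PiLp.norm_apply_le w l).trans hwT
        · exact norm_apply_apply_le _ i l
    _ = d * ‖T‖ * ‖smoothJac h (Φ x)‖ := by simp [mul_assoc]

theorem isClosed_setOf_ball_subset {X : Type*} [PseudoMetricSpace X] (s : Set X) (r : ℝ) :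
    IsClosed {x | ball x r ⊆ s} := by
  have : {x | ball x r ⊆ s}ᶜ = thickening r sᶜ := by
    ext x
    simp [not_subset, mem_thickening_iff, dist_comm, and_comm]
  exact ⟨this ▸ isOpen_thickening⟩

end SobolevApproximation

section MollifiedDeformation

section PushedBump

variable {F : Type*} [NormedAddCommGroup F] [InnerProductSpace ℝ F] [FiniteDimensional ℝ F]
  [MeasurableSpace F]

/-- The kernel whose density at `x` is the normalized bump `b` recentred at `Φ x`. Averaging
against it mollifies and then composes with `Φ`. -/
def pushedBump (μ : Measure F) (b : ContDiffBump (0 : F)) (Φ : F → F) (x y : F) : ℝ :=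
  b.normed μ (Φ x - y)

variable {μ : Measure F} {b : ContDiffBump (0 : F)} {Φ : F → F}

theorem kernelAvg_pushedBump {E : Type*} [NormedAddCommGroup E] [NormedSpace ℝ E] (f : F → E) :
    kernelAvg μ (pushedBump μ b Φ) f = kernelAvg μ (fun z y => b.normed μ (z - y)) f ∘ Φ :=
  rfl

variable [BorelSpace F] [μ.IsAddHaarMeasure]

theorem mem_ball_of_pushedBump_ne_zero {x y : F} (h : pushedBump μ b Φ x y ≠ 0) :
    y ∈ ball (Φ x) b.rOut := by
  have : Φ x - y ∈ ball (0 : F) b.rOut := b.support_normed_eq (μ := μ) ▸ h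
  rwa [mem_ball', dist_eq_norm, ← mem_ball_zero_iff]

theorem isAvgKernel_pushedBump (hΦ : Continuous Φ) {R : ℝ} (hR : ∀ x, ‖Φ x - x‖ + b.rOut ≤ R) :
    IsAvgKernel μ (pushedBump μ b Φ) (1 / μ.real (closedBall 0 b.rIn)) R where
  nonneg _ _ := b.nonneg_normed _
  continuous := b.continuous_normed.comp (by fun_prop : Continuous fun z : F × F => Φ z.1 - z.2)
  lintegral_eq_one x := by
    simp only [pushedBump]
    rw [lintegral_sub_left_eq_self (fun y => ENNReal.ofReal (b.normed μ y)),
      ← ofReal_integral_eq_lintegral_ofReal b.integrable_normed (ae_of_all _ b.nonneg_normed),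
      b.integral_normed, ENNReal.ofReal_one]
  le _ _ := b.normed_le_div_measure_closedBall_rIn μ _
  mem_ball x y hxy := by
    refine ball_subset (x := Φ x) ?_ (mem_ball_of_pushedBump_ne_zero hxy)
    rw [dist_eq_norm]
    linarith [hR x]

theorem hasCompactSupport_kernelAvg_pushedBump {E : Type*} [NormedAddCommGroup E]
    [NormedSpace ℝ E] {f : F → E} {Ω : Set F} (hΩb : Bornology.IsBounded Ω)
    (hΦ : ∃ ρ > 0, ∀ x, ¬ ball x ρ ⊆ Ω → Disjoint (ball (Φ x) b.rOut) Ω) :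
    HasCompactSupport (kernelAvg μ (pushedBump μ b Φ) (Ω.indicator f)) ∧
      tsupport (kernelAvg μ (pushedBump μ b Φ) (Ω.indicator f)) ⊆ Ω := by
  obtain ⟨ρ, hρ, hdisj⟩ := hΦ
  have support_subset : Function.support (kernelAvg μ (pushedBump μ b Φ) (Ω.indicator f)) ⊆
      {x | ball x ρ ⊆ Ω} := Function.support_subset_iff'.2 fun x hx => by
    refine integral_eq_zero_of_ae (ae_of_all _ fun y => ?_)
    by_contra hxy
    obtain ⟨hk, hf⟩ := smul_ne_zero_iff.1 hxy
    exact (hdisj x hx).notMem_of_mem_left (mem_ball_of_pushedBump_ne_zero hk)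
      (mem_of_indicator_ne_zero hf)
  have tsupport_subset := (closure_minimal support_subset (isClosed_setOf_ball_subset Ω ρ)).trans
    fun x (hx : ball x ρ ⊆ Ω) => hx (mem_ball_self hρ)
  exact ⟨isCompact_of_isClosed_isBounded (isClosed_tsupport _) (hΩb.subset tsupport_subset),
    tsupport_subset⟩

end PushedBump

variable {d m : ℕ} {Ω : Set (Euc d)}

section SingleScale

variable {p : ℝ} {v : Euc d → Euc m} {Dv : Euc d → Mat m d} {b : ContDiffBump (0 : Euc d)}
  {δ B β : ℝ} {Φ : Euc d → Euc d}

theorem isCcSmooth_kernelAvg_pushedBump {μ : Measure (Euc d)}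
    (hΦ : IsOutwardDeformation Ω μ b.rOut δ B β Φ) (hΩb : Bornology.IsBounded Ω)
    (hv : LocallyIntegrable (Ω.indicator v) volume) :
    IsCcSmooth Ω (kernelAvg volume (pushedBump volume b Φ) (Ω.indicator v)) :=
  ⟨(contDiff_kernelAvg_sub b.contDiff_normed b.hasCompactSupport_normed hv).comp hΦ.contDiff,
    hasCompactSupport_kernelAvg_pushedBump hΩb hΦ.exists_disjoint_ball⟩

/-- The mollified Jacobian is corrected only where `Φ` is not locally a translation; there the
kernel sees a ball carrying little of the mass of `|Dv|^p`. -/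
theorem norm_smoothJac_kernelAvg_pushedBump_sub_le (hΩo : IsOpen Ω) (hΩ : volume Ω ≠ ⊤)
    (hp : 1 ≤ p) (hv : MemW1p0 Ω (ENNReal.ofReal p) v Dv)
    [IsFiniteMeasure (volume.withDensity fun y => ‖Ω.indicator Dv y‖ₑ ^ p)]
    (hΦ : IsOutwardDeformation Ω (volume.withDensity fun y => ‖Ω.indicator Dv y‖ₑ ^ p)
      b.rOut δ B β Φ) (hB : 0 ≤ B) (hβ : 0 ≤ β) (x : Euc d) :
    ‖smoothJac (kernelAvg volume (pushedBump volume b Φ) (Ω.indicator v)) x -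
        kernelAvg volume (pushedBump volume b Φ) (Ω.indicator Dv) x‖ ≤
      d * B * (β / volume.real (closedBall (0 : Euc d) b.rIn)) ^ (1 / p) := by
  have hp0 : 0 < p := by linarith
  have hp1 : 1 ≤ ENNReal.ofReal p := ENNReal.one_le_ofReal.2 hp
  have : IsFiniteMeasure (volume.restrict Ω) := isFiniteMeasure_restrict.2 hΩ
  have hρ : ContDiff ℝ (⊤ : ℕ∞) (b.normed volume) := b.contDiff_normed
  have hv_int : LocallyIntegrable (Ω.indicator v) volume :=
    ((integrable_indicator_iff hΩo.measurableSet).2 (hv.1.1.integrable hp1)).locallyIntegrable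
  have hk := isAvgKernel_pushedBump (μ := volume) hΦ.contDiff.continuous hΦ.norm_sub_add_le
  have comp_bound := norm_smoothJac_comp_sub_le (x := x)
    ((contDiff_kernelAvg_sub hρ b.hasCompactSupport_normed hv_int).differentiable (by simp) (Φ x))
    (hΦ.contDiff.differentiable (by simp) x)
  rw [hv.smoothJac_kernelAvg_sub hΩo.measurableSet hp1 (hρ.of_le (by norm_cast))
    b.hasCompactSupport_normed, ← kernelAvg_pushedBump] at comp_bound
  refine comp_bound.trans ?_
  by_cases hx : fderiv ℝ Φ x = ContinuousLinearMap.id ℝ (Euc d)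
  · rw [hx, sub_self, norm_zero, mul_zero, zero_mul]
    positivity
  gcongr
  · exact hΦ.norm_fderiv_sub_id_le x
  rw [one_div, Real.le_rpow_inv_iff_of_pos (norm_nonneg _) (by positivity) hp0]
  have avg_bound := hk.enorm_kernelAvg_rpow_le_mul_setLIntegral
    ((aestronglyMeasurable_indicator_iff hΩo.measurableSet).2 hv.1.2.1.1) hp x
  rw [← withDensity_apply _ measurableSet_ball, ← ofReal_measureReal,
    ← ENNReal.ofReal_mul (by positivity), ← ofReal_norm,
    ENNReal.ofReal_rpow_of_nonneg (norm_nonneg _) hp0.le,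
    ENNReal.ofReal_le_ofReal_iff (by positivity)] at avg_bound
  refine avg_bound.trans ?_
  rw [one_div_mul_eq_div]
  gcongr
  exact hΦ.measureReal_ball_le x hx

end SingleScale

/-- A mass `O(ε)` per `ε`-ball beats the normalization `ε^(-d/p)` of the kernel exactly when
`p > d - 1`. -/
theorem tendsto_mul_div_pow_rpow {d : ℕ} {p : ℝ} (hp : 0 < p) (hpd : (d : ℝ) - 1 < p) (B : ℝ)
    {C : ℝ} (hC : 0 ≤ C) :
    Tendsto (fun ε : ℝ => B * ε * (C * ε / ε ^ d) ^ (1 / p)) (𝓝[>] 0) (𝓝 0) := by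
  have exponent_pos : 0 < 1 + (1 - (d : ℝ)) / p := by
    rw [← neg_lt_iff_pos_add', lt_div_iff₀ hp]
    linarith
  have rpow_tendsto : Tendsto (fun ε : ℝ => B * C ^ (1 / p) * ε ^ (1 + (1 - (d : ℝ)) / p))
      (𝓝[>] 0) (𝓝 0) := by
    have := (Real.continuousAt_rpow_const 0 _ (.inr exponent_pos.le)).tendsto.const_mul
      (B * C ^ (1 / p))
    rw [Real.zero_rpow exponent_pos.ne', mul_zero] at this
    exact this.mono_left nhdsWithin_le_nhds
  refine rpow_tendsto.congr' (eventually_of_mem self_mem_nhdsWithin fun ε (hε : 0 < ε) => ?_)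
  have : C * ε / ε ^ d = C * ε ^ (1 - (d : ℝ)) := by
    rw [Real.rpow_sub hε, Real.rpow_one, Real.rpow_natCast, mul_div_assoc]
  simp only [this]
  rw [Real.mul_rpow hC (by positivity), ← Real.rpow_mul hε.le, Real.rpow_add hε, Real.rpow_one,
    mul_one_div]
  ring

theorem tendsto_mul_div_measureReal_closedBall_rpow {p : ℝ} (hp : 0 < p) (hpd : (d : ℝ) - 1 < p)
    (B : ℝ) {C c : ℝ} (hC : 0 ≤ C) (hc : 0 < c) :
    Tendsto (fun ε : ℝ => d * (B * ε) *
      (C * ε / volume.real (closedBall (0 : Euc d) (c * ε / 2))) ^ (1 / p)) (𝓝[>] 0) (𝓝 0) := by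
  refine (tendsto_mul_div_pow_rpow hp hpd (d * B) (C := C / ((c / 2) ^ d *
    volume.real (ball (0 : Euc d) 1))) (by positivity)).congr' ?_
  filter_upwards [self_mem_nhdsWithin] with ε hε
  have hε : 0 < ε := hε
  rw [Measure.addHaar_real_closedBall _ _ (by positivity), finrank_euclideanSpace_fin, mul_assoc,
    mul_div_right_comm c, mul_pow]
  field_simp

theorem ofReal_one_div_measureReal_closedBall_mul_le {c K ε : ℝ} (hc : 0 < c) (hK : 0 ≤ K)
    (hε : 0 < ε) (y : Euc d) :
    ENNReal.ofReal (1 / volume.real (closedBall (0 : Euc d) (c * ε / 2))) *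
      volume (ball y (K * ε)) ≤ ENNReal.ofReal ((2 * K / c) ^ d) := by
  have unit_pos : 0 < volume.real (ball (0 : Euc d) 1) :=
    ENNReal.toReal_pos (measure_ball_pos _ _ one_pos).ne' measure_ball_lt_top.ne
  refine (mul_le_mul_right (measure_mono ball_subset_closedBall) _).trans ?_
  rw [← ofReal_measureReal measure_closedBall_lt_top.ne, ← ENNReal.ofReal_mul (by positivity),
    Measure.addHaar_real_closedBall _ _ (by positivity),
    Measure.addHaar_real_closedBall _ _ (by positivity), finrank_euclideanSpace_fin]
  refine (congrArg ENNReal.ofReal ?_).le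
  have ratio : 2 * K / c = K * ε / (c * ε / 2) := by field_simp
  rw [ratio, div_pow (K * ε), mul_comm, mul_one_div, mul_div_mul_right _ _ unit_pos.ne']

theorem exists_isAvgKernelSeq_isCcSmooth (hΩo : IsOpen Ω) (hΩb : Bornology.IsBounded Ω)
    (hΩl : HasLipschitzBoundary Ω) {p : ℝ} (hp : 1 ≤ p) (hpd : (d : ℝ) - 1 < p)
    {v : Euc d → Euc m} {Dv : Euc d → Mat m d} (hv : MemW1p0 Ω (ENNReal.ofReal p) v Dv) :
    ∃ (k : ℕ → Euc d → Euc d → ℝ) (S R : ℕ → ℝ) (C : ℝ≥0∞), IsAvgKernelSeq volume k S R C ∧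
      (∀ n, IsCcSmooth Ω (kernelAvg volume (k n) (Ω.indicator v))) ∧
      TendstoUniformly (fun n => smoothJac (kernelAvg volume (k n) (Ω.indicator v)) -
        kernelAvg volume (k n) (Ω.indicator Dv)) 0 atTop := by
  have hp0 : 0 < p := by linarith
  have hΩ : volume Ω ≠ ⊤ := hΩb.measure_lt_top.ne
  have : IsFiniteMeasure (volume.restrict Ω) := isFiniteMeasure_restrict.2 hΩ
  have hv_int : LocallyIntegrable (Ω.indicator v) volume := ((integrable_indicator_iff
    hΩo.measurableSet).2 (hv.1.1.integrable (ENNReal.one_le_ofReal.2 hp))).locallyIntegrable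
  have : IsFiniteMeasure (volume.withDensity fun y => ‖Ω.indicator Dv y‖ₑ ^ p) := by
    have := lintegral_rpow_enorm_lt_top_of_eLpNorm_lt_top (by simpa using hp0)
      ENNReal.ofReal_ne_top ((memLp_indicator_iff_restrict hΩo.measurableSet).2 hv.1.2.1).2
    rw [ENNReal.toReal_ofReal hp0.le] at this
    exact isFiniteMeasure_withDensity this.ne
  obtain ⟨t, r, ν, a, hcov⟩ := hΩl.exists_outerConeCover hΩb
  obtain ⟨c, K, B, C, hc, hK, hB, hC, hev⟩ := hcov.exists_isOutwardDeformation hΩo hΩb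
    (volume.withDensity fun y => ‖Ω.indicator Dv y‖ₑ ^ p)
  obtain ⟨ε, hε_tendsto, hε⟩ :=
    exists_seq_forall_of_frequently (hev.and self_mem_nhdsWithin).frequently
  choose hΦ ε_pos using hε
  replace ε_pos : ∀ n, 0 < ε n := ε_pos
  choose Φ hΦ using hΦ
  let b (n : ℕ) : ContDiffBump (0 : Euc d) := ⟨c * ε n / 2, c * ε n,
    half_pos (mul_pos hc (ε_pos n)), half_lt_self (mul_pos hc (ε_pos n))⟩
  have uniform_bound :=
    (tendsto_mul_div_measureReal_closedBall_rpow hp0 hpd B hC hc).comp hε_tendsto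
  refine ⟨fun n => pushedBump volume (b n) (Φ n), _, fun n => K * ε n,
    ENNReal.ofReal ((2 * K / c) ^ d), ⟨fun n => isAvgKernel_pushedBump
      (hΦ n).contDiff.continuous (hΦ n).norm_sub_add_le, ?_, ENNReal.ofReal_ne_top,
      fun n y => ofReal_one_div_measureReal_closedBall_mul_le hc hK.le (ε_pos n) y⟩,
    fun n => isCcSmooth_kernelAvg_pushedBump (b := b n) (hΦ n) hΩb hv_int, ?_⟩
  · simpa using (hε_tendsto.mono_right nhdsWithin_le_nhds).const_mul K
  · refine Metric.tendstoUniformly_iff.2 fun ω hω => ?_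
    filter_upwards [uniform_bound.eventually (gt_mem_nhds hω)] with n hn x
    rw [Pi.zero_apply, dist_zero_left]
    exact (norm_smoothJac_kernelAvg_pushedBump_sub_le (b := b n) hΩo hΩ hp hv (hΦ n)
      (mul_nonneg hB (ε_pos n).le) (mul_nonneg hC (ε_pos n).le) x).trans_lt hn

end MollifiedDeformation

section ConvexIntegrands

variable {m d : ℕ}

theorem frobNorm_le_mul_norm (ξ : Mat m d) : frobNorm ξ ≤ ((m : ℝ) * d + 1) * ‖ξ‖ := by
  have entry_le : ∀ i j, ξ i j ^ 2 ≤ ‖ξ‖ ^ 2 := fun i j =>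
    sq_le_sq.2 (by simpa using norm_apply_apply_le ξ i j)
  have hmd : (0 : ℝ) ≤ (m : ℝ) * d := by positivity
  refine (Real.sqrt_le_left (by positivity)).2 ?_
  calc ∑ i, ∑ j, ξ i j ^ 2 ≤ ∑ _i : Fin m, ∑ _j : Fin d, ‖ξ‖ ^ 2 :=
        Finset.sum_le_sum fun i _ => Finset.sum_le_sum fun j _ => entry_le i j
    _ = (m : ℝ) * d * ‖ξ‖ ^ 2 := by simp [mul_assoc]
    _ ≤ (((m : ℝ) * d + 1) * ‖ξ‖) ^ 2 := by
        rw [mul_pow]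
        gcongr
        nlinarith

/-- A convex `[0,+∞]`-valued function which is at most `K < +∞` on the ball of radius `θ` around
the origin; `f` plays the role of `W(x, ·)` at a fixed `x`. -/
structure IsConvexBoundedNearZero (f : Mat m d → ℝ≥0∞) (θ : ℝ) (K : ℝ≥0∞) : Prop where
  convex : ConvexENNReal f
  radius_pos : 0 < θ
  le_of_norm_lt : ∀ e, ‖e‖ < θ → f e ≤ K
  bound_ne_top : K ≠ ⊤

namespace IsConvexBoundedNearZero

variable {f : Mat m d → ℝ≥0∞} {θ r s t : ℝ} {K : ℝ≥0∞} {e ξ A G : Mat m d}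

theorem map_smul_add_le (hf : IsConvexBoundedNearZero f θ K) (hr : 0 ≤ r) (hr1 : r < 1)
    (he : ‖e‖ < (1 - r) * θ) :
    f (r • ξ + e) ≤ ENNReal.ofReal r * f ξ + ENNReal.ofReal (1 - r) * K := by
  have h1r : 0 < 1 - r := sub_pos.2 hr1
  have split : r • ξ + e = r • ξ + (1 - r) • ((1 - r)⁻¹ • e) := by rw [smul_inv_smul₀ h1r.ne']
  rw [split]
  refine (hf.convex _ _ r hr hr1.le).trans ?_
  gcongr
  refine hf.le_of_norm_lt _ ?_
  rwa [norm_smul, Real.norm_of_nonneg (by positivity), inv_mul_lt_iff₀ h1r]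

theorem map_smul_add_le_add (hf : IsConvexBoundedNearZero f θ K) (hr : 0 ≤ r) (hr1 : r < 1)
    (he : ‖e‖ < (1 - r) * θ) : f (r • ξ + e) ≤ f ξ + K := by
  refine (hf.map_smul_add_le hr hr1 he).trans (add_le_add ?_ ?_)
  · exact mul_le_of_le_one_left' (ENNReal.ofReal_le_one.2 hr1.le)
  · exact mul_le_of_le_one_left' (ENNReal.ofReal_le_one.2 (by linarith))

theorem le_of_dense (hf : IsConvexBoundedNearZero f θ K) {h : Mat m d → ℝ≥0∞} (hh : Continuous h)
    {D : Set (Mat m d)} (hD : Dense D) (hle : ∀ ξ ∈ D, h ξ ≤ f ξ) (η : Mat m d) :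
    h η ≤ f η := by
  rcases eq_or_ne (f η) ⊤ with hη | hη
  · exact hη ▸ le_top
  have segment_le : ∀ t ∈ Ioo (0 : ℝ) 1,
      h (t • η) ≤ ENNReal.ofReal t * f η + ENNReal.ofReal (1 - t) * K := by
    rintro t ⟨ht0, ht1⟩
    by_contra! hlt
    obtain ⟨ξ, hξD, hξlt, hξ⟩ := hD.exists_mem_open
      ((isOpen_lt continuous_const hh).inter (isOpen_ball (x := t • η) (ε := (1 - t) * θ)))
      ⟨t • η, hlt, mem_ball_self (mul_pos (sub_pos.2 ht1) hf.radius_pos)⟩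
    have hfξ := hf.map_smul_add_le ht0.le ht1 (ξ := η) (e := ξ - t • η)
      (by simpa [dist_eq_norm] using hξ)
    rw [add_sub_cancel] at hfξ
    exact (hle ξ hξD).not_gt (hfξ.trans_lt hξlt)
  have left_tendsto : Tendsto (fun t : ℝ => h (t • η)) (𝓝[<] 1) (𝓝 (h η)) := by
    have : Continuous fun t : ℝ => h (t • η) := hh.comp (by fun_prop)
    simpa using (this.tendsto 1).mono_left nhdsWithin_le_nhds
  have right_tendsto : Tendsto (fun t : ℝ => ENNReal.ofReal t * f η + ENNReal.ofReal (1 - t) * K)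
      (𝓝[<] 1) (𝓝 (f η)) := by
    have ofReal_mul_tendsto : ∀ {φ : ℝ → ℝ}, Continuous φ → ∀ {z : ℝ≥0∞}, z ≠ ⊤ →
        Tendsto (fun t => ENNReal.ofReal (φ t) * z) (𝓝[<] 1) (𝓝 (ENNReal.ofReal (φ 1) * z)) :=
      fun hφ _ hz => ENNReal.Tendsto.mul_const
        (ENNReal.tendsto_ofReal ((hφ.tendsto 1).mono_left nhdsWithin_le_nhds)) (.inr hz)
    simpa using (ofReal_mul_tendsto continuous_id hη).add
      (ofReal_mul_tendsto (continuous_sub_left 1) hf.bound_ne_top)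
  refine le_of_tendsto_of_tendsto left_tendsto right_tendsto ?_
  filter_upwards [Ioo_mem_nhdsLT (zero_lt_one' ℝ)] with t ht using segment_le t ht

theorem eventually_map_add_smul_le (hf : IsConvexBoundedNearZero f θ K) (ht : 0 ≤ t) (ht1 : t < 1)
    (hs : 1 < s) {ι : Type*} {l : Filter ι} {J : ι → Mat m d} (hJ : Tendsto J l (𝓝 A)) :
    ∀ᶠ i in l, f (G + t • J i) ≤
      ENNReal.ofReal t * f (G + A) + ENNReal.ofReal (1 - t) * (f (s • G) + K) := by
  have h1t : 0 < 1 - t := sub_pos.2 ht1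
  have hs0 : 0 < s := by linarith
  have hs1 : s⁻¹ < 1 := inv_lt_one_of_one_lt₀ hs
  have error_tendsto : Tendsto (fun i => ‖(1 - t)⁻¹ • t • (J i - A)‖) l (𝓝 0) := by
    simpa using (((hJ.sub_const A).const_smul t).const_smul (1 - t)⁻¹).norm
  filter_upwards [error_tendsto.eventually_lt_const
    (mul_pos (sub_pos.2 hs1) hf.radius_pos)] with i hi
  have decomposition : G + t • J i =
      t • (G + A) + (1 - t) • (s⁻¹ • s • G + (1 - t)⁻¹ • t • (J i - A)) := by
    rw [inv_smul_smul₀ hs0.ne', smul_add (1 - t), smul_inv_smul₀ h1t.ne']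
    module
  rw [decomposition]
  refine (hf.convex _ _ t ht ht1.le).trans ?_
  gcongr
  exact hf.map_smul_add_le_add (by positivity) hs1 hi

/-- The argument `Y ≈ t • A + (1 - t * l) • G` is a convex combination of a bounded multiple of `A`
and of a perturbation of a multiple `ρ⁻¹ • G` lying strictly between `G` and `s • G`. -/
theorem exists_map_le_map_smul_add (hf : IsConvexBoundedNearZero f θ K) {ρ l : ℝ} (hρ : 0 < ρ)
    (hρ1 : ρ < 1) (hs : ρ * ρ * s = 1) (ht : 0 ≤ t) (ht1 : t < 1) (hl : 0 ≤ l) (hl1 : l ≤ 1)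
    {Y : Mat m d}
    (hY : ‖Y - (t • A + (1 - t * l) • G)‖ < ρ * (1 - t) * ((1 - ρ) * θ)) :
    ∃ c, 0 ≤ c ∧ c ≤ (1 - ρ)⁻¹ ∧ c * l ≤ 1 ∧ f Y ≤ f (c • A) + (f (s • G) + K) := by
  have htl : t * l ≤ t := mul_le_of_le_one_right ht hl1
  have h1ρ : 0 < 1 - ρ := sub_pos.2 hρ1
  set b := ρ * (1 - t * l) with hb
  set e := Y - (t • A + (1 - t * l) • G) with he
  have b_pos : 0 < b := mul_pos hρ (by linarith)
  have le_b : ρ * (1 - t) ≤ b := mul_le_mul_of_nonneg_left (by linarith) hρ.le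
  have le_one_sub_b : 1 - ρ ≤ 1 - b := by nlinarith [mul_nonneg ht hl]
  have one_sub_b_pos : 0 < 1 - b := h1ρ.trans_le le_one_sub_b
  refine ⟨t / (1 - b), by positivity, ?_, ?_, ?_⟩
  · rw [div_eq_mul_inv]
    exact (mul_le_of_le_one_left (by positivity) ht1.le).trans (by gcongr)
  · rw [div_mul_eq_mul_div, div_le_one one_sub_b_pos]
    nlinarith
  have decomposition :
      Y = (1 - b) • ((t / (1 - b)) • A) + (1 - (1 - b)) • (ρ • s • G + b⁻¹ • e) := by
    have hG : b • ρ • s • G = (1 - t * l) • G := by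
      rw [smul_smul, smul_smul, hb, show ρ * (1 - t * l) * ρ * s = 1 - t * l by
        linear_combination (1 - t * l) * hs]
    rw [sub_sub_cancel, smul_smul, mul_div_cancel₀ _ one_sub_b_pos.ne', smul_add, hG,
      smul_inv_smul₀ b_pos.ne', he]
    abel
  rw [decomposition]
  refine (hf.convex _ _ (1 - b) one_sub_b_pos.le (by linarith)).trans (add_le_add ?_ ?_)
  · exact mul_le_of_le_one_left' (ENNReal.ofReal_le_one.2 (by linarith))
  · refine (mul_le_of_le_one_left' (ENNReal.ofReal_le_one.2 (by linarith))).trans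
      (hf.map_smul_add_le_add hρ.le hρ1 ?_)
    rw [norm_smul, Real.norm_of_nonneg (by positivity), inv_mul_lt_iff₀ b_pos]
    have := hf.radius_pos
    exact hY.trans_le (by gcongr)

end IsConvexBoundedNearZero

theorem exists_ae_isConvexBoundedNearZero {α : Type*} [MeasurableSpace α] {μ : Measure α}
    {W : α → Mat m d → ℝ≥0∞} (hWm : Measurable (Function.uncurry W))
    (hWc : ∀ᵐ x ∂μ, ConvexENNReal (W x) ∧ LowerSemicontinuous (W x)) {θ : ℝ} (hθ : 0 < θ)
    (hWθ : ∫⁻ x, ⨆ ξ ∈ {ξ : Mat m d | frobNorm ξ ≤ θ}, W x ξ ∂μ < ⊤) :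
    ∃ (r : ℝ) (K : α → ℝ≥0∞), 0 < r ∧ Measurable K ∧ ∫⁻ x, K x ∂μ ≠ ⊤ ∧
      ∀ᵐ x ∂μ, IsConvexBoundedNearZero (W x) r (K x) := by
  set c : ℝ := (m : ℝ) * d + 1
  have hc0 : 0 < c := by positivity
  obtain ⟨E, hEc, hE⟩ := TopologicalSpace.exists_countable_dense (Mat m d)
  let D : Set (Mat m d) := E ∩ ball 0 (θ / c)
  have hD : D.Countable := hEc.mono inter_subset_left
  let K : α → ℝ≥0∞ := fun x => ⨆ ξ ∈ D, W x ξ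
  have hKm : Measurable K := .biSup D hD fun ξ _ => hWm.comp (measurable_id.prodMk measurable_const)
  have hKi : ∫⁻ x, K x ∂μ < ⊤ := by
    refine (lintegral_mono fun x => biSup_mono fun ξ hξ => ?_).trans_lt hWθ
    have hξ' : ‖ξ‖ * c < θ := (lt_div_iff₀ hc0).1 (by simpa using hξ.2)
    exact (frobNorm_le_mul_norm ξ).trans (by linarith)
  refine ⟨θ / c, K, by positivity, hKm, hKi.ne, ?_⟩
  filter_upwards [hWc, ae_lt_top hKm hKi.ne] with x ⟨hconv, hlsc⟩ hfin
  refine ⟨hconv, by positivity, fun e he => ?_, hfin.ne⟩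
  by_contra! hlt
  have super_isOpen : IsOpen (W x ⁻¹' Ioi (K x) ∩ ball 0 (θ / c)) :=
    (hlsc.isOpen_preimage (K x)).inter isOpen_ball
  obtain ⟨ξ, hξE, hξK, hξ⟩ := hE.exists_mem_open super_isOpen ⟨e, hlt, by simpa using he⟩
  exact (le_iSup₂ (f := fun η (_ : η ∈ D) => W x η) ξ ⟨hξE, hξ⟩).not_gt hξK

theorem ae_essInf_restrict_closedBall_le {X : Type*} [PseudoMetricSpace X]
    [SecondCountableTopology X] [MeasurableSpace X] [OpensMeasurableSpace X] (μ : Measure X)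
    (f : X → ℝ≥0∞) :
    ∀ᵐ x ∂μ, ∀ δ : ℝ, 0 < δ → essInf f (μ.restrict (closedBall x δ)) ≤ f x := by
  have hB := TopologicalSpace.isBasis_countableBasis X
  have basis_le : ∀ᵐ x ∂μ, ∀ b ∈ TopologicalSpace.countableBasis X, x ∈ b →
      essInf f (μ.restrict b) ≤ f x :=
    (ae_ball_iff (TopologicalSpace.countable_countableBasis X)).2 fun b hb =>
      (ae_restrict_iff' (hB.isOpen hb).measurableSet).1 ae_essInf_le
  filter_upwards [basis_le] with x hx δ hδ
  obtain ⟨b, hb, hxb, hbδ⟩ := hB.exists_subset_of_mem_open (mem_ball_self hδ) isOpen_ball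
  refine le_trans ?_ (hx b hb hxb)
  exact essInf_antitone_measure (Measure.absolutelyContinuous_of_le
    (Measure.restrict_mono (hbδ.trans ball_subset_closedBall) le_rfl))

variable {α : Type*} [MeasurableSpace α] {ν : Measure α} {W : α → Mat m d → ℝ≥0∞} {θ : ℝ}
  {K : α → ℝ≥0∞}

theorem ae_le_of_le_essInf (hW : ∀ᵐ y ∂ν, IsConvexBoundedNearZero (W y) θ (K y))
    {h : Mat m d → ℝ≥0∞} (hh : Continuous h) (hle : ∀ η, h η ≤ essInf (fun y => W y η) ν) :
    ∀ᵐ y ∂ν, ∀ η, h η ≤ W y η := by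
  obtain ⟨D, hDc, hD⟩ := TopologicalSpace.exists_countable_dense (Mat m d)
  have dense_le : ∀ᵐ y ∂ν, ∀ ξ ∈ D, h ξ ≤ W y ξ := (ae_ball_iff hDc).2 fun ξ _ => by
    filter_upwards [ae_essInf_le (μ := ν) (f := fun y => W y ξ)] with y hy using (hle ξ).trans hy
  filter_upwards [hW, dense_le] with y hy hyD using hy.le_of_dense hh hD hyD

theorem ofReal_integral_mul_le_lintegral {κ φ : α → ℝ} (hκ : ∀ y, 0 ≤ κ y)
    (hφ : Integrable (fun y => κ y * φ y) ν) {w : α → ℝ≥0∞}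
    (hle : ∀ᵐ y ∂ν, ENNReal.ofReal (φ y) ≤ w y) :
    ENNReal.ofReal (∫ y, κ y * φ y ∂ν) ≤ ∫⁻ y, ENNReal.ofReal (κ y) * w y ∂ν := by
  have pos_part_le : ∫ y, κ y * φ y ∂ν ≤ ∫ y, max (κ y * φ y) 0 ∂ν :=
    integral_mono hφ hφ.pos_part fun y => le_max_left _ _
  refine (ENNReal.ofReal_le_ofReal pos_part_le).trans ?_
  rw [ofReal_integral_eq_lintegral_ofReal hφ.pos_part (ae_of_all _ fun y => le_max_right _ _)]
  refine lintegral_mono_ae ?_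
  filter_upwards [hle] with y hy
  rw [ENNReal.ofReal_max, ENNReal.ofReal_zero, max_eq_left zero_le, ENNReal.ofReal_mul (hκ y)]
  gcongr

/-- Jensen's inequality for the weights `κ`, the missing mass `1 - ∫ κ` being put at the origin. -/
theorem biconj_essInf_integral_smul_le
    (hW : ∀ᵐ y ∂ν, IsConvexBoundedNearZero (W y) θ (K y)) {κ : α → ℝ} (hκ : ∀ y, 0 ≤ κ y)
    (hκi : Integrable κ ν) (hκ1 : ∫ y, κ y ∂ν ≤ 1) {U : α → Mat m d}
    (hU : Integrable (fun y => κ y • U y) ν) :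
    biconj (fun η => essInf (fun y => W y η) ν) (∫ y, κ y • U y ∂ν) ≤
      (∫⁻ y, ENNReal.ofReal (κ y) * W y (U y) ∂ν) + essInf (fun y => W y 0) ν := by
  refine iSup_le fun L => iSup_le fun c => iSup_le fun hLc => ?_
  let L' : Mat m d →L[ℝ] ℝ := LinearMap.toContinuousLinearMap L
  have affine_le : ∀ᵐ y ∂ν, ∀ η, ENNReal.ofReal (L η + c) ≤ W y η :=
    ae_le_of_le_essInf hW
      (ENNReal.continuous_ofReal.comp (L'.continuous.add continuous_const)) hLc
  have hLU : Integrable (fun y => κ y * L (U y)) ν := by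
    simpa [L'] using L'.integrable_comp hU
  have affine_integral : L (∫ y, κ y • U y ∂ν) + c =
      (∫ y, κ y * (L (U y) + c) ∂ν) + c * (1 - ∫ y, κ y ∂ν) := by
    have hL : L (∫ y, κ y • U y ∂ν) = ∫ y, κ y * L (U y) ∂ν := by
      simpa [L'] using (L'.integral_comp_comm hU).symm
    simp only [mul_add]
    rw [integral_add hLU (hκi.mul_const c), hL, integral_mul_const]
    ring
  rw [affine_integral]
  refine ENNReal.ofReal_add_le.trans (add_le_add ?_ ?_)
  · refine ofReal_integral_mul_le_lintegral hκ ?_ (affine_le.mono fun y hy => hy (U y))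
    exact (hLU.add (hκi.mul_const c)).congr (.of_forall fun y => (mul_add _ _ _).symm)
  · have hc0 : ENNReal.ofReal c ≤ essInf (fun y => W y 0) ν := by simpa using hLc 0
    refine le_trans (ENNReal.ofReal_le_ofReal_iff'.2 ?_) hc0
    have hκ0 : 0 ≤ ∫ y, κ y ∂ν := integral_nonneg hκ
    rcases le_total 0 c with hc | hc
    · exact .inl (by nlinarith)
    · exact .inr (mul_nonpos_of_nonpos_of_nonneg hc (by linarith))

theorem IsConvexBoundedNearZero.map_le_of_le_biconj
    (hW : ∀ᵐ y ∂ν, IsConvexBoundedNearZero (W y) θ (K y)) {f : Mat m d → ℝ≥0∞} {K₀ : ℝ≥0∞}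
    (hf : IsConvexBoundedNearZero f θ K₀) (hν : essInf (fun y => W y 0) ν ≤ K₀)
    {B : ℝ} {C a : ℝ≥0∞}
    (hstab : ∀ ξ, ‖ξ‖ ≤ B → f ξ ≤ C * biconj (fun η => essInf (fun y => W y η) ν) ξ + a)
    {κ : α → ℝ} (hκ : ∀ y, 0 ≤ κ y) (hκi : Integrable κ ν) (hκ1 : ∫ y, κ y ∂ν ≤ 1)
    {U : α → Mat m d} (hU : Integrable (fun y => κ y • U y) ν)
    {ρ s t : ℝ} (hρ : 0 < ρ) (hρ1 : ρ < 1) (hs : ρ * ρ * s = 1) (ht : 0 ≤ t) (ht1 : t < 1)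
    (hB : (1 - ρ)⁻¹ * ‖∫ y, κ y • U y ∂ν‖ ≤ B) {G Y : Mat m d}
    (hY : ‖Y - (t • (∫ y, κ y • U y ∂ν) + (1 - t * ∫ y, κ y ∂ν) • G)‖ <
      ρ * (1 - t) * ((1 - ρ) * θ)) :
    f Y ≤ C * (ENNReal.ofReal (1 - ρ)⁻¹ * (∫⁻ y, ENNReal.ofReal (κ y) * W y (U y) ∂ν) + K₀) + a +
      (f (s • G) + K₀) := by
  obtain ⟨c, hc0, hcρ, hc1, hfY⟩ := hf.exists_map_le_map_smul_add hρ hρ1 hs ht ht1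
    (integral_nonneg hκ) hκ1 hY
  refine hfY.trans (add_le_add ((hstab _ ?_).trans ?_) le_rfl)
  · rw [norm_smul, Real.norm_of_nonneg hc0]
    exact (mul_le_mul_of_nonneg_right hcρ (norm_nonneg _)).trans hB
  gcongr
  have average_eq : c • ∫ y, κ y • U y ∂ν = ∫ y, (c * κ y) • U y ∂ν := by
    simp only [mul_smul, integral_smul]
  have energy_eq : ∫⁻ y, ENNReal.ofReal (c * κ y) * W y (U y) ∂ν =
      ENNReal.ofReal c * ∫⁻ y, ENNReal.ofReal (κ y) * W y (U y) ∂ν := by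
    simp only [ENNReal.ofReal_mul hc0, mul_assoc]
    exact lintegral_const_mul' _ _ ENNReal.ofReal_ne_top
  rw [average_eq]
  refine (biconj_essInf_integral_smul_le hW (fun y => mul_nonneg hc0 (hκ y)) (hκi.const_mul c)
    (by rwa [integral_const_mul]) ?_).trans ?_
  · exact (hU.smul c).congr (.of_forall fun y => smul_smul c (κ y) (U y))
  · rw [energy_eq]
    gcongr

end ConvexIntegrands

section Domination

theorem StabilityEstimate.exists_of_norm_le {m d : ℕ} {Ω : Set (Euc d)} {p : ℝ}
    {W : Euc d → Mat m d → ℝ≥0∞} (hW : StabilityEstimate Ω p W) (M : ℝ) :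
    ∃ (C : ℝ≥0∞) (δ₀ : ℝ) (α : Euc d → ℝ≥0∞), C ≠ ⊤ ∧ 0 < δ₀ ∧ ∫⁻ x in Ω, α x ≠ ⊤ ∧
      ∀ δ : ℝ, 0 < δ → δ < δ₀ → ∀ x ∈ Ω, ∀ ξ : Mat m d, ‖ξ‖ ≤ M * δ ^ (-(d : ℝ) / p) →
        W x ξ ≤ C * biconj (fun η => essInf (fun y => W y η)
          (volume.restrict (closedBall x δ ∩ Ω))) ξ + α x := by
  obtain ⟨C, δ₀, α, -, hδ₀, hα, hle⟩ := hW (max (((m : ℝ) * d + 1) * M) 2) (by simp)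
  refine ⟨ENNReal.ofReal C, δ₀, α, ENNReal.ofReal_ne_top, hδ₀, hα.ne, fun δ hδ hδ₀ x hx ξ hξ =>
    hle δ hδ hδ₀ x hx ξ ?_⟩
  calc frobNorm ξ ≤ ((m : ℝ) * d + 1) * ‖ξ‖ := frobNorm_le_mul_norm ξ
    _ ≤ ((m : ℝ) * d + 1) * (M * δ ^ (-(d : ℝ) / p)) := by gcongr
    _ ≤ max (((m : ℝ) * d + 1) * M) 2 * δ ^ (-(d : ℝ) / p) := by
        rw [← mul_assoc]
        gcongr
        exact le_max_left _ _

theorem IsAvgKernelSeq.exists_norm_kernelAvg_le {V E : Type*} [NormedAddCommGroup V]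
    [NormedSpace ℝ V] [FiniteDimensional ℝ V] [MeasurableSpace V] [BorelSpace V]
    [NormedAddCommGroup E] [NormedSpace ℝ E] {μ : Measure V} [μ.IsAddHaarMeasure]
    {k : ℕ → V → V → ℝ} {S R : ℕ → ℝ} {C : ℝ≥0∞} (hk : IsAvgKernelSeq μ k S R C) {p : ℝ}
    (hp : 1 ≤ p) {f : V → E} (hf : MemLp f (ENNReal.ofReal p) μ) :
    ∃ M : ℝ, ∀ n x, ‖kernelAvg μ (k n) f x‖ ≤ M * R n ^ (-(Module.finrank ℝ V : ℝ) / p) := by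
  have hp0 : 0 < p := by linarith
  set v := μ (ball 0 1) with hv
  have hv0 : v ≠ 0 := (measure_ball_pos μ 0 one_pos).ne'
  have hvt : v ≠ ⊤ := measure_ball_lt_top.ne
  set A := ∫⁻ x, ‖f x‖ₑ ^ p ∂μ
  have hAt : A ≠ ⊤ := by
    simpa [ENNReal.toReal_ofReal hp0.le] using (lintegral_rpow_enorm_lt_top_of_eLpNorm_lt_top
      (by simpa using hp0) ENNReal.ofReal_ne_top hf.2).ne
  set B := (C / v * A) ^ (1 / p) with hB
  have hBt : B ≠ ⊤ := ENNReal.rpow_ne_top_of_nonneg (by positivity)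
    (ENNReal.mul_ne_top (ENNReal.div_ne_top hk.const_ne_top hv0) hAt)
  refine ⟨B.toReal, fun n x => ?_⟩
  have hR := (hk.isAvgKernel n).radius_pos
  set r := ENNReal.ofReal (R n ^ Module.finrank ℝ V) with hr
  have hr0 : r ≠ 0 := by simpa [hr] using pow_pos hR _
  have height_le : ENNReal.ofReal (S n) ≤ C / v * r⁻¹ := by
    rw [← div_eq_mul_inv, ENNReal.le_div_iff_mul_le (.inl hr0) (.inl ENNReal.ofReal_ne_top),
      ENNReal.le_div_iff_mul_le (.inl hv0) (.inl hvt), mul_assoc, hr, hv,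
      ← Measure.addHaar_ball_of_pos μ 0 hR]
    exact hk.mul_measure_ball_le n 0
  have rpow_le : ‖kernelAvg μ (k n) f x‖ₑ ^ p ≤ C / v * A * r⁻¹ := by
    calc ‖kernelAvg μ (k n) f x‖ₑ ^ p ≤ ENNReal.ofReal (S n) * A :=
          ((hk.isAvgKernel n).enorm_kernelAvg_rpow_le_mul_setLIntegral hf.1 hp x).trans
            (mul_le_mul_right (setLIntegral_le_lintegral _ _) _)
      _ ≤ C / v * r⁻¹ * A := by gcongr
      _ = C / v * A * r⁻¹ := mul_right_comm _ _ _
  have radius_rpow : r⁻¹ ^ (1 / p) = ENNReal.ofReal (R n ^ (-(Module.finrank ℝ V : ℝ) / p)) := by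
    rw [hr, ← Real.rpow_natCast, ← ENNReal.ofReal_rpow_of_pos hR, ← ENNReal.rpow_neg,
      ← ENNReal.rpow_mul, mul_one_div, ENNReal.ofReal_rpow_of_pos hR]
  rw [← ENNReal.ofReal_le_ofReal_iff (by positivity), ofReal_norm,
    ENNReal.ofReal_mul ENNReal.toReal_nonneg, ENNReal.ofReal_toReal hBt, ← radius_rpow, hB,
    ← ENNReal.mul_rpow_of_nonneg _ _ (by positivity), one_div, ENNReal.le_rpow_inv_iff hp0]
  exact rpow_le

namespace IsAvgKernel

variable {V E : Type*} [MetricSpace V] [MeasurableSpace V] [BorelSpace V]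
  [NormedAddCommGroup E] [NormedSpace ℝ E] {μ : Measure V} {k : V → V → ℝ} {S R : ℝ}

theorem setIntegral_closedBall_inter (hk : IsAvgKernel μ k S R) {x : V} {F : V → E}
    (hF : ∀ y, k x y = 0 → F y = 0) (A : Set V) :
    ∫ y in closedBall x R ∩ A, F y ∂μ = ∫ y in A, F y ∂μ := by
  rw [← Measure.restrict_restrict measurableSet_closedBall]
  exact setIntegral_eq_integral_of_forall_compl_eq_zero fun y hy =>
    hF y (not_imp_comm.1 (hk.mem_ball x y) fun h => hy (ball_subset_closedBall h))

theorem integrableOn_smul [ProperSpace V] (hk : IsAvgKernel μ k S R) {A : Set V}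
    (hA : MeasurableSet A) {f : V → E} (hf : LocallyIntegrable (A.indicator f) μ) (x : V) :
    IntegrableOn (fun y => k x y • f y) A μ := by
  rw [← integrable_indicator_iff hA, indicator_smul]
  exact hk.integrable_smul hf x

theorem norm_sub_convexCombination_le [ProperSpace V] [CompleteSpace E] (hk : IsAvgKernel μ k S R)
    {A : Set V} (hA : MeasurableSet A) {f g : V → E} (hf : LocallyIntegrable (A.indicator f) μ)
    (hg : LocallyIntegrable (A.indicator g) μ) {x : V} {ω : ℝ}
    (hω : ∀ y ∈ ball x R ∩ A, ‖g y - g x‖ ≤ ω) (hω0 : 0 ≤ ω) {t : ℝ} (ht : 0 ≤ t) (ht1 : t ≤ 1)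
    (z : E) :
    ‖g x + t • z - (t • (∫ y in A, k x y • (g y + f y) ∂μ) +
      (1 - t * ∫ y in A, k x y ∂μ) • g x)‖ ≤ ‖z - kernelAvg μ k (A.indicator f) x‖ + ω := by
  have hkf := hk.integrableOn_smul hA hf x
  have hkg := hk.integrableOn_smul hA hg x
  have difference_eq : g x + t • z - (t • (∫ y in A, k x y • (g y + f y) ∂μ) +
      (1 - t * ∫ y in A, k x y ∂μ) • g x) =
      t • ((z - kernelAvg μ k (A.indicator f) x) - ∫ y in A, k x y • (g y - g x) ∂μ) := by
    simp only [smul_add, smul_sub, kernelAvg_indicator hA]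
    rw [integral_add hkg hkf, integral_sub hkg ((hk.integrable x).integrableOn.smul_const _),
      integral_smul_const]
    module
  rw [difference_eq, norm_smul, Real.norm_of_nonneg ht]
  refine (mul_le_of_le_one_left (norm_nonneg _) ht1).trans ((norm_sub_le _ _).trans ?_)
  gcongr
  exact hk.norm_setIntegral_smul_le hA hω hω0

end IsAvgKernel

/-- The argument `G x + t • z` is, up to a small error, the combination of an average of `G + V`
and of `G x` described in `exists_map_le_map_smul_add`. -/
theorem IsAvgKernel.map_add_smul_le {X : Type*} [MetricSpace X] [ProperSpace X] [MeasurableSpace X]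
    [BorelSpace X] {μ : Measure X} {k : X → X → ℝ} {S R : ℝ} (hk : IsAvgKernel μ k S R) {m d : ℕ}
    {Ω : Set X} (hΩ : MeasurableSet Ω) {W : X → Mat m d → ℝ≥0∞} {θ : ℝ} {K : X → ℝ≥0∞}
    (hW : ∀ᵐ y ∂μ.restrict Ω, IsConvexBoundedNearZero (W y) θ (K y)) {x : X}
    (hWx : IsConvexBoundedNearZero (W x) θ (K x))
    (hx0 : essInf (fun y => W y 0) (μ.restrict (closedBall x R ∩ Ω)) ≤ W x 0)
    {B : ℝ} {C a : ℝ≥0∞} (hstab : ∀ ξ, ‖ξ‖ ≤ B → W x ξ ≤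
      C * biconj (fun η => essInf (fun y => W y η) (μ.restrict (closedBall x R ∩ Ω))) ξ + a)
    {G V : X → Mat m d} (hG : LocallyIntegrable (Ω.indicator G) μ)
    (hV : LocallyIntegrable (Ω.indicator V) μ) {ρ s t : ℝ} (hρ : 0 < ρ) (hρ1 : ρ < 1)
    (hs : ρ * ρ * s = 1) (ht : 0 ≤ t) (ht1 : t < 1)
    (hB : (1 - ρ)⁻¹ * ‖kernelAvg μ k (Ω.indicator (G + V)) x‖ ≤ B) {ω : ℝ} (hω0 : 0 ≤ ω)
    (hω : ∀ y ∈ ball x R ∩ Ω, ‖G y - G x‖ ≤ ω) {z : Mat m d}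
    (hz : ‖z - kernelAvg μ k (Ω.indicator V) x‖ + ω < ρ * (1 - t) * ((1 - ρ) * θ)) :
    W x (G x + t • z) ≤
      C * (ENNReal.ofReal (1 - ρ)⁻¹ * (∫⁻ y in Ω, ENNReal.ofReal (k x y) * W y (G y + V y) ∂μ) +
        K x) + a + (W x (s • G x) + K x) := by
  have hT : μ.restrict (closedBall x R ∩ Ω) ≤ μ.restrict Ω :=
    Measure.restrict_mono inter_subset_right le_rfl
  have average_eq : ∫ y in closedBall x R ∩ Ω, k x y • (G y + V y) ∂μ =
      ∫ y in Ω, k x y • (G y + V y) ∂μ :=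
    hk.setIntegral_closedBall_inter (fun y hy => by simp [hy]) Ω
  have mass_eq : ∫ y in closedBall x R ∩ Ω, k x y ∂μ = ∫ y in Ω, k x y ∂μ :=
    hk.setIntegral_closedBall_inter (fun y hy => hy) Ω
  have hGV : IntegrableOn (fun y => k x y • (G y + V y)) Ω μ := by
    simp only [smul_add]
    exact (hk.integrableOn_smul hΩ hG x).add (hk.integrableOn_smul hΩ hV x)
  refine (hWx.map_le_of_le_biconj (G := G x) (ae_mono hT hW) (hx0.trans
    (hWx.le_of_norm_lt 0 (by simpa using hWx.radius_pos))) hstab (hk.nonneg x)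
    (hk.integrable x).restrict (hk.setIntegral_le_one _ x) (hGV.mono_set inter_subset_right) hρ hρ1
    hs ht ht1 ?_ ?_).trans ?_
  · rw [average_eq]
    rwa [kernelAvg_indicator hΩ] at hB
  · rw [average_eq, mass_eq]
    exact (hk.norm_sub_convexCombination_le hΩ hV hG hω hω0 ht ht1.le z).trans_lt hz
  · gcongr

theorem exists_mul_self_mul_eq_one {s : ℝ} (hs : 1 < s) :
    ∃ ρ : ℝ, 0 < ρ ∧ ρ < 1 ∧ ρ * ρ * s = 1 := by
  have hs0 : 0 < s := by linarith
  refine ⟨(√s)⁻¹, by positivity, inv_lt_one_of_one_lt₀ (Real.lt_sqrt_of_sq_lt (by simpa)), ?_⟩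
  rw [← mul_inv, Real.mul_self_sqrt hs0.le, inv_mul_cancel₀ hs0.ne']

theorem exists_eventually_ae_map_add_smul_le {m d : ℕ} {Ω : Set (Euc d)} (hΩ : MeasurableSet Ω)
    {p : ℝ} (hp : 1 ≤ p) {W : Euc d → Mat m d → ℝ≥0∞} {θ : ℝ} (hθ : 0 < θ) {K : Euc d → ℝ≥0∞}
    (hK : Measurable K) (hKi : ∫⁻ x in Ω, K x ≠ ⊤)
    (hW : ∀ᵐ x ∂volume.restrict Ω, IsConvexBoundedNearZero (W x) θ (K x))
    (hstab : StabilityEstimate Ω p W) {G V : Euc d → Mat m d} (hGΩ : UniformContinuousOn G Ω)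
    (hG : MemLp G (ENNReal.ofReal p) (volume.restrict Ω))
    (hV : MemLp V (ENNReal.ofReal p) (volume.restrict Ω)) {s : ℝ} (hs : 1 < s)
    (hGWm : AEMeasurable (fun x => W x (s • G x)) (volume.restrict Ω))
    (hGW : ∫⁻ x in Ω, W x (s • G x) ≠ ⊤) {k : ℕ → Euc d → Euc d → ℝ} {S R : ℕ → ℝ} {C : ℝ≥0∞}
    (hk : IsAvgKernelSeq volume k S R C) {J : ℕ → Euc d → Mat m d}
    (hJ : TendstoUniformly (fun n => J n - kernelAvg volume (k n) (Ω.indicator V)) 0 atTop)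
    {t : ℝ} (ht : 0 ≤ t) (ht1 : t < 1) :
    ∃ (D : ℝ≥0∞) (Q : Euc d → ℝ≥0∞), D ≠ ⊤ ∧ ∫⁻ x in Ω, Q x ≠ ⊤ ∧
      ∀ᶠ n in atTop, ∀ᵐ x ∂volume.restrict Ω, W x (G x + t • J n x) ≤
        D * (∫⁻ y in Ω, ENNReal.ofReal (k n x y) * W y (G y + V y)) + Q x := by
  have hp1 : 1 ≤ ENNReal.ofReal p := ENNReal.one_le_ofReal.2 hp
  have hGi := ((memLp_indicator_iff_restrict hΩ).2 hG).locallyIntegrable hp1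
  have hVi := ((memLp_indicator_iff_restrict hΩ).2 hV).locallyIntegrable hp1
  obtain ⟨ρ, hρ, hρ1, hρs⟩ := exists_mul_self_mul_eq_one hs
  have hGVi := (memLp_indicator_iff_restrict hΩ).2 (hG.add hV)
  obtain ⟨M, hM⟩ := hk.exists_norm_kernelAvg_le hp hGVi
  obtain ⟨C', δ₀, α, hC', hδ₀, hα, hstab⟩ := hstab.exists_of_norm_le ((1 - ρ)⁻¹ * M)
  obtain ⟨τ, hτ_eq⟩ : ∃ τ, τ = ρ * (1 - t) * ((1 - ρ) * θ) := ⟨_, rfl⟩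
  have hτ : 0 < τ := hτ_eq ▸ mul_pos (mul_pos hρ (sub_pos.2 ht1)) (mul_pos (sub_pos.2 hρ1) hθ)
  obtain ⟨δ₁, hδ₁, hGδ⟩ := Metric.uniformContinuousOn_iff.1 hGΩ (τ / 2) (half_pos hτ)
  have hQm : AEMeasurable (fun x => C' * K x + (W x (s • G x) + K x)) (volume.restrict Ω) :=
    (hK.const_mul C').aemeasurable.add (hGWm.add hK.aemeasurable)
  refine ⟨C' * ENNReal.ofReal (1 - ρ)⁻¹, fun x => α x + (C' * K x + (W x (s • G x) + K x)),
    ENNReal.mul_ne_top hC' ENNReal.ofReal_ne_top, ?_, ?_⟩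
  · refine (lintegral_add_right' α hQm).trans_ne (ENNReal.add_ne_top.2 ⟨hα, ?_⟩)
    rw [lintegral_add_left (hK.const_mul C'), lintegral_const_mul _ hK, lintegral_add_right _ hK]
    exact ENNReal.add_ne_top.2 ⟨ENNReal.mul_ne_top hC' hKi, ENNReal.add_ne_top.2 ⟨hGW, hKi⟩⟩
  filter_upwards [Metric.tendstoUniformly_iff.1 hJ (τ / 2) (half_pos hτ),
    hk.tendsto_radius.eventually (gt_mem_nhds hδ₀),
    hk.tendsto_radius.eventually (gt_mem_nhds hδ₁)] with n hJn hRδ₀ hRδ₁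
  have hkn := hk.isAvgKernel n
  filter_upwards [hW, ae_restrict_mem hΩ,
    ae_essInf_restrict_closedBall_le (volume.restrict Ω) (fun y => W y 0)] with x hWx hxΩ hx0
  have essInf_le := hx0 (R n) hkn.radius_pos
  rw [Measure.restrict_restrict measurableSet_closedBall] at essInf_le
  refine (hkn.map_add_smul_le hΩ hW hWx essInf_le (hstab _ hkn.radius_pos hRδ₀ x hxΩ) hGi hVi hρ
    hρ1 hρs ht ht1 ?_ (half_pos hτ).le (fun y hy => ?_) ?_).trans_eq (by ring)
  · refine (mul_le_mul_of_nonneg_left (hM n x) (inv_nonneg.2 (sub_pos.2 hρ1).le)).trans_eq ?_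
    rw [finrank_euclideanSpace_fin, mul_assoc]
  · rw [← dist_eq_norm]
    exact (hGδ y hy.2 x hxΩ ((mem_ball.1 hy.1).trans hRδ₁)).le
  · have hz := hJn x
    rw [Pi.zero_apply, dist_zero_left, Pi.sub_apply] at hz
    exact (add_lt_add_left hz _).trans_eq (by rw [add_halves, hτ_eq])

end Domination

section EnergyConvergence

theorem limsup_lintegral_le_of_le_add {α ι : Type*} [MeasurableSpace α] {μ : Measure α}
    {l : Filter ι} [l.NeBot] [l.IsCountablyGenerated] {g H : ι → α → ℝ≥0∞} {F Q Y : α → ℝ≥0∞}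
    (hg : ∀ n, AEMeasurable (g n) μ) (hH : ∀ n, AEMeasurable (H n) μ) (hF : AEMeasurable F μ)
    (hY : AEMeasurable Y μ) (hFi : ∫⁻ x, F x ∂μ ≠ ⊤) (hQi : ∫⁻ x, Q x ∂μ ≠ ⊤)
    (hle : ∀ᶠ n in l, ∀ᵐ x ∂μ, g n x ≤ H n x + Q x)
    (hHF : Tendsto (fun n => ∫⁻ x, H n x - F x ∂μ) l (𝓝 0))
    (hgY : ∀ᵐ x ∂μ, ∀ᶠ n in l, g n x ≤ Y x) :
    limsup (fun n => ∫⁻ x, g n x ∂μ) l ≤ ∫⁻ x, Y x ∂μ := by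
  let f (n : ι) (x : α) : ℝ≥0∞ := g n x - (H n x - F x) - Y x
  have hHFm : ∀ n, AEMeasurable (fun x => H n x - F x) μ := fun n => (hH n).sub hF
  have f_le : ∀ᶠ n in l, ∀ᵐ x ∂μ, f n x ≤ F x + Q x := hle.mono fun n hn => hn.mono fun x hx =>
    tsub_le_self.trans (tsub_le_iff_right.2 (hx.trans (by
      rw [add_right_comm, add_comm (F x)]
      exact add_le_add_left le_tsub_add _)))
  have f_tendsto : Tendsto (fun n => ∫⁻ x, f n x ∂μ) l (𝓝 (∫⁻ _, 0 ∂μ)) := by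
    refine tendsto_lintegral_filter_of_dominated_convergence' (fun x => F x + Q x)
      (.of_forall fun n => ((hg n).sub (hHFm n)).sub hY) f_le ?_ ?_
    · rw [lintegral_add_left' hF]
      exact ENNReal.add_ne_top.2 ⟨hFi, hQi⟩
    · filter_upwards [hgY] with x hx
      exact tendsto_const_nhds.congr' (hx.mono fun n hn =>
        (tsub_eq_zero_of_le (tsub_le_self.trans hn)).symm)
  have g_le : ∀ n, ∫⁻ x, g n x ∂μ ≤
      ∫⁻ x, f n x ∂μ + ∫⁻ x, Y x ∂μ + ∫⁻ x, H n x - F x ∂μ := fun n => by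
    rw [← lintegral_add_right' _ hY, ← lintegral_add_right' _ (hHFm n)]
    exact lintegral_mono fun x => tsub_le_iff_right.1 (tsub_le_iff_right.1 le_rfl)
  refine (limsup_le_limsup (.of_forall g_le)).trans_eq ?_
  simpa using ((f_tendsto.add tendsto_const_nhds).add hHF).limsup_eq

namespace IsAvgKernelSeq

variable {V : Type*} [MetricSpace V] [MeasurableSpace V] {μ : Measure V}
  {k : ℕ → V → V → ℝ} {S R : ℕ → ℝ} {C : ℝ≥0∞}

theorem comp (hk : IsAvgKernelSeq μ k S R C) {ψ : ℕ → ℕ} (hψ : Tendsto ψ atTop atTop) :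
    IsAvgKernelSeq μ (k ∘ ψ) (S ∘ ψ) (R ∘ ψ) C :=
  ⟨fun n => hk.isAvgKernel (ψ n), hk.tendsto_radius.comp hψ, hk.const_ne_top,
    fun n => hk.mul_measure_ball_le (ψ n)⟩

variable [BorelSpace V] [ProperSpace V] [IsLocallyFiniteMeasure μ]

theorem tendsto_eLpNorm_kernelAvg_indicator_sub {E : Type*} [NormedAddCommGroup E]
    [NormedSpace ℝ E] [CompleteSpace E] (hk : IsAvgKernelSeq μ k S R C) {p : ℝ} (hp : 1 ≤ p)
    {Ω : Set V} (hΩ : MeasurableSet Ω) (hΩμ : μ Ω ≠ ⊤) {f : V → E}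
    (hf : MemLp f (ENNReal.ofReal p) (μ.restrict Ω)) :
    Tendsto (fun n => eLpNorm (kernelAvg μ (k n) (Ω.indicator f) - f) (ENNReal.ofReal p)
      (μ.restrict Ω)) atTop (𝓝 0) := by
  have indicator_memLp := (memLp_indicator_iff_restrict hΩ).2 hf
  refine (hk.tendsto_eLpNorm_kernelAvg_sub hp indicator_memLp hΩμ).congr fun n => ?_
  exact eLpNorm_congr_ae (ae_eq_rfl.sub (indicator_ae_eq_restrict hΩ))

theorem tendsto_setLIntegral_lintegral_sub (hk : IsAvgKernelSeq μ k S R C) {Ω : Set V}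
    (hΩ : MeasurableSet Ω) (hΩμ : μ Ω ≠ ⊤) {F : V → ℝ≥0∞} (hF : AEMeasurable F (μ.restrict Ω))
    (hFi : ∫⁻ x in Ω, F x ∂μ ≠ ⊤) :
    Tendsto (fun n => ∫⁻ x in Ω, (∫⁻ y in Ω, ENNReal.ofReal (k n x y) * F y ∂μ) - F x ∂μ)
      atTop (𝓝 0) := by
  set f : V → ℝ := Ω.indicator fun y => (F y).toReal with hf
  have toReal_integrable : IntegrableOn (fun y => (F y).toReal) Ω μ :=
    integrable_toReal_of_lintegral_ne_top hF hFi
  have hFt : ∀ᵐ y ∂μ.restrict Ω, F y < ⊤ := ae_lt_top' hF hFi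
  have f_memLp : MemLp f (ENNReal.ofReal 1) μ := by
    rw [ENNReal.ofReal_one]
    exact memLp_one_iff_integrable.2 ((integrable_indicator_iff hΩ).2 toReal_integrable)
  have average_eq : ∀ n x, ∫⁻ y in Ω, ENNReal.ofReal (k n x y) * F y ∂μ =
      ENNReal.ofReal (kernelAvg μ (k n) f x) := fun n x => by
    have hkn := hk.isAvgKernel n
    rw [hf, kernelAvg_indicator hΩ, ofReal_integral_eq_lintegral_ofReal
      (hkn.integrableOn_smul hΩ (f_memLp.locallyIntegrable (by simp)) x)
      (ae_of_all _ fun y => smul_nonneg (hkn.nonneg x y) ENNReal.toReal_nonneg)]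
    refine lintegral_congr_ae (hFt.mono fun y hy => ?_)
    simp only [smul_eq_mul, ENNReal.ofReal_mul (hkn.nonneg x y), ENNReal.ofReal_toReal hy.ne]
  refine tendsto_of_tendsto_of_tendsto_of_le_of_le tendsto_const_nhds
    (hk.tendsto_eLpNorm_kernelAvg_sub le_rfl f_memLp hΩμ) (fun _ => zero_le) fun n => ?_
  simp only [ENNReal.ofReal_one, eLpNorm_one_eq_lintegral_enorm]
  refine lintegral_mono_ae ?_
  filter_upwards [hFt, ae_restrict_mem hΩ] with x hx hxΩ
  have f_apply : F x = ENNReal.ofReal (f x) := by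
    rw [hf, indicator_of_mem hxΩ, ENNReal.ofReal_toReal hx.ne]
  rw [average_eq, f_apply, ← ENNReal.ofReal_sub _ (indicator_nonneg (by simp) x)]
  exact Real.ofReal_le_enorm _

end IsAvgKernelSeq

end EnergyConvergence

section Recovery

variable {d m : ℕ} {Ω : Set (Euc d)} {p : ℝ} {W : Euc d → Mat m d → ℝ≥0∞}
  {G : Euc d → Mat m d} {v : Euc d → Euc m} {Dv : Euc d → Mat m d}

theorem aemeasurable_uncurry_apply {α β γ : Type*} [MeasurableSpace α] [MeasurableSpace β]
    [MeasurableSpace γ] {μ : Measure α} {f : α → β → γ} (hf : Measurable (Function.uncurry f))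
    {u : α → β} (hu : AEMeasurable u μ) : AEMeasurable (fun x => f x (u x)) μ :=
  hf.comp_aemeasurable (aemeasurable_id.prodMk hu)

theorem limsup_setLIntegral_map_add_smul_le (hΩ : MeasurableSet Ω) (hΩv : volume Ω ≠ ⊤)
    (hp : 1 ≤ p) (hWm : Measurable (Function.uncurry W)) {θ : ℝ} (hθ : 0 < θ)
    {K : Euc d → ℝ≥0∞} (hK : Measurable K) (hKi : ∫⁻ x in Ω, K x ≠ ⊤)
    (hW : ∀ᵐ x ∂volume.restrict Ω, IsConvexBoundedNearZero (W x) θ (K x))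
    (hstab : StabilityEstimate Ω p W) {V : Euc d → Mat m d} (hGΩ : UniformContinuousOn G Ω)
    (hG : MemLp G (ENNReal.ofReal p) (volume.restrict Ω))
    (hV : MemLp V (ENNReal.ofReal p) (volume.restrict Ω)) {s : ℝ} (hs : 1 < s)
    (hGW : ∫⁻ x in Ω, W x (s • G x) ≠ ⊤) (hGV : ∫⁻ x in Ω, W x (G x + V x) ≠ ⊤)
    {k : ℕ → Euc d → Euc d → ℝ} {S R : ℕ → ℝ} {C : ℝ≥0∞} (hk : IsAvgKernelSeq volume k S R C)
    {J : ℕ → Euc d → Mat m d} (hJm : ∀ n, AEMeasurable (J n) (volume.restrict Ω))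
    (hJ : TendstoUniformly (fun n => J n - kernelAvg volume (k n) (Ω.indicator V)) 0 atTop)
    (hJV : ∀ᵐ x ∂volume.restrict Ω, Tendsto (fun n => J n x) atTop (𝓝 (V x)))
    {t : ℝ} (ht : 0 ≤ t) (ht1 : t < 1) :
    limsup (fun n => ∫⁻ x in Ω, W x (G x + t • J n x)) atTop ≤
      ENNReal.ofReal t * (∫⁻ x in Ω, W x (G x + V x)) +
        ENNReal.ofReal (1 - t) * ((∫⁻ x in Ω, W x (s • G x)) + ∫⁻ x in Ω, K x) := by
  have hGm := hG.1.aemeasurable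
  have hGVm : AEMeasurable (fun x => W x (G x + V x)) (volume.restrict Ω) :=
    aemeasurable_uncurry_apply hWm (hGm.add hV.1.aemeasurable)
  have hGWm : AEMeasurable (fun x => W x (s • G x)) (volume.restrict Ω) :=
    aemeasurable_uncurry_apply hWm (hGm.const_smul s)
  have average_aemeasurable : ∀ n, AEMeasurable
      (fun x => ∫⁻ y in Ω, ENNReal.ofReal (k n x y) * W y (G y + V y)) (volume.restrict Ω) :=
    fun n => AEMeasurable.lintegral_prod_right'
      ((hk.isAvgKernel n).continuous.measurable.ennreal_ofReal.aemeasurable.mul hGVm.comp_snd)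
  obtain ⟨D, Q, hD, hQ, hle⟩ := exists_eventually_ae_map_add_smul_le hΩ hp hθ hK hKi hW hstab hGΩ
    hG hV hs hGWm hGW hk hJ ht ht1
  refine (limsup_lintegral_le_of_le_add (F := fun x => D * W x (G x + V x))
    (Y := fun x => ENNReal.ofReal t * W x (G x + V x) +
      ENNReal.ofReal (1 - t) * (W x (s • G x) + K x))
    (fun n => aemeasurable_uncurry_apply hWm (hGm.add ((hJm n).const_smul t)))
    (fun n => (average_aemeasurable n).const_mul D) (hGVm.const_mul D)
    ((hGVm.const_mul _).add ((hGWm.add hK.aemeasurable).const_mul _)) ?_ hQ hle ?_ ?_).trans_eq ?_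
  · rw [lintegral_const_mul' _ _ hD]
    exact ENNReal.mul_ne_top hD hGV
  · simp_rw [← ENNReal.mul_sub fun _ _ => hD, lintegral_const_mul' _ _ hD]
    simpa using ENNReal.Tendsto.const_mul
      (hk.tendsto_setLIntegral_lintegral_sub hΩ hΩv hGVm hGV) (.inr hD)
  · filter_upwards [hW, hJV] with x hWx hJx using hWx.eventually_map_add_smul_le ht ht1 hs hJx
  · rw [lintegral_add_left' (hGVm.const_mul _), lintegral_const_mul' _ _ ENNReal.ofReal_ne_top,
      lintegral_const_mul' _ _ ENNReal.ofReal_ne_top, lintegral_add_left' hGWm]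

theorem MemW1p0.exists_isAvgKernelSeq (hΩo : IsOpen Ω) (hΩb : Bornology.IsBounded Ω)
    (hΩl : HasLipschitzBoundary Ω) (hp : 1 ≤ p) (hpd : (d : ℝ) - 1 < p)
    (hv : MemW1p0 Ω (ENNReal.ofReal p) v Dv) :
    ∃ (φ : ℕ → Euc d → Euc m) (k : ℕ → Euc d → Euc d → ℝ) (S R : ℕ → ℝ) (C : ℝ≥0∞),
      (∀ n, IsCcSmooth Ω (φ n)) ∧
      TendstoW1p Ω (ENNReal.ofReal p) φ (fun n => smoothJac (φ n)) v Dv ∧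
      (∀ᵐ x ∂volume.restrict Ω, Tendsto (fun n => smoothJac (φ n) x) atTop (𝓝 (Dv x))) ∧
      IsAvgKernelSeq volume k S R C ∧
      TendstoUniformly (fun n => smoothJac (φ n) - kernelAvg volume (k n) (Ω.indicator Dv)) 0
        atTop := by
  have hΩm := hΩo.measurableSet
  have hΩv : volume Ω ≠ ⊤ := hΩb.measure_lt_top.ne
  have : IsFiniteMeasure (volume.restrict Ω) := isFiniteMeasure_restrict.2 hΩv
  obtain ⟨k, S, R, C, hk, hφ, hJ⟩ := exists_isAvgKernelSeq_isCcSmooth hΩo hΩb hΩl hp hpd hv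
  have hφv := hk.tendsto_eLpNorm_kernelAvg_indicator_sub hp hΩm hΩv hv.1.1
  have avg_Dv := hk.tendsto_eLpNorm_kernelAvg_indicator_sub hp hΩm hΩv hv.1.2.1
  have avg_Dv_aesm : ∀ n, AEStronglyMeasurable (kernelAvg volume (k n) (Ω.indicator Dv))
      (volume.restrict Ω) := fun n => ((hk.isAvgKernel n).aestronglyMeasurable_kernelAvg
    ((memLp_indicator_iff_restrict hΩm).2 hv.1.2.1).1).restrict
  have hφ_aesm : ∀ n, AEStronglyMeasurable (smoothJac (kernelAvg volume (k n) (Ω.indicator v)))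
      (volume.restrict Ω) := fun n =>
    (continuous_smoothJac (hφ n).contDiff_one).aestronglyMeasurable
  have hφDv : Tendsto (fun n => eLpNorm
      (smoothJac (kernelAvg volume (k n) (Ω.indicator v)) - Dv)
      (ENNReal.ofReal p) (volume.restrict Ω)) atTop (𝓝 0) := by
    have uniform_part := tendsto_eLpNorm_zero_of_tendstoUniformly (ν := volume.restrict Ω) hJ
      (ENNReal.ofReal p)
    refine tendsto_of_tendsto_of_tendsto_of_le_of_le tendsto_const_nhds
      (by simpa using uniform_part.add avg_Dv) (fun _ => zero_le) fun n => ?_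
    simpa using eLpNorm_add_le ((hφ_aesm n).sub (avg_Dv_aesm n))
      ((avg_Dv_aesm n).sub hv.1.2.1.1) (ENNReal.one_le_ofReal.2 hp)
  obtain ⟨ψ, hψ, hae⟩ := (tendstoInMeasure_of_tendsto_eLpNorm (by simpa using by linarith)
    hφ_aesm hv.1.2.1.1 hφDv).exists_seq_tendsto_ae
  refine ⟨_, k ∘ ψ, S ∘ ψ, R ∘ ψ, C, fun n => hφ (ψ n),
    ⟨hφv.comp hψ.tendsto_atTop, hφDv.comp hψ.tendsto_atTop⟩, hae, hk.comp hψ.tendsto_atTop,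
    fun u hu => hψ.tendsto_atTop.eventually (hJ u hu)⟩

theorem IsCcSmooth.smul {w : Euc d → Euc m} (hw : IsCcSmooth Ω w) (t : ℝ) :
    IsCcSmooth Ω (t • w) :=
  ⟨hw.1.const_smul t, hw.2.1.mono (Function.support_const_smul_subset t w),
    (closure_mono (Function.support_const_smul_subset t w)).trans hw.2.2⟩

theorem smoothJac_smul {w : Euc d → Euc m} (hw : Differentiable ℝ w) (t : ℝ) :
    smoothJac (t • w) = t • smoothJac w := by
  ext x i j
  simp [smoothJac, fderiv_const_smul (hw x)]

theorem eLpNorm_smul_sub_le {α E : Type*} [MeasurableSpace α] [NormedAddCommGroup E]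
    [NormedSpace ℝ E] {μ : Measure α} {q : ℝ≥0∞} (hq : 1 ≤ q) {u w : α → E}
    (hu : AEStronglyMeasurable u μ) (hw : AEStronglyMeasurable w μ) {t : ℝ} (ht : 0 ≤ t)
    (ht1 : t ≤ 1) :
    eLpNorm (t • u - w) q μ ≤ eLpNorm (u - w) q μ + ENNReal.ofReal (1 - t) * eLpNorm w q μ := by
  have decomposition : t • u - w = t • (u - w) - (1 - t) • w := by module
  rw [decomposition]
  refine (eLpNorm_sub_le ((hu.sub hw).const_smul t) (hw.const_smul _) hq).trans ?_
  rw [eLpNorm_const_smul, eLpNorm_const_smul, Real.enorm_of_nonneg ht,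
    Real.enorm_of_nonneg (sub_nonneg.2 ht1)]
  gcongr
  exact mul_le_of_le_one_left' (ENNReal.ofReal_le_one.2 ht1)

end Recovery

section LavrentievGap

theorem lintegral_le_liminf_of_tendsto_eLpNorm {α E : Type*} [MeasurableSpace α]
    [NormedAddCommGroup E] [MeasurableSpace E] [BorelSpace E] {μ : Measure α}
    {W : α → E → ℝ≥0∞} (hWm : Measurable (Function.uncurry W))
    (hWl : ∀ᵐ x ∂μ, LowerSemicontinuous (W x)) {q : ℝ≥0∞} (hq : q ≠ 0) {U : ℕ → α → E} {V : α → E}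
    (hU : ∀ n, AEStronglyMeasurable (U n) μ) (hV : AEStronglyMeasurable V μ)
    (hUV : Tendsto (fun n => eLpNorm (U n - V) q μ) atTop (𝓝 0)) :
    ∫⁻ x, W x (V x) ∂μ ≤ liminf (fun n => ∫⁻ x, W x (U n x) ∂μ) atTop := by
  by_contra! hlt
  obtain ⟨c, hc, hcV⟩ := exists_between hlt
  obtain ⟨ψ, hψ, hψc⟩ := extraction_of_frequently_atTop (frequently_lt_of_liminf_lt (h := hc))
  obtain ⟨χ, -, hχ⟩ := (tendstoInMeasure_of_tendsto_eLpNorm hq (fun n => hU (ψ n)) hV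
    (hUV.comp hψ.tendsto_atTop)).exists_seq_tendsto_ae
  refine hcV.not_ge ?_
  calc ∫⁻ x, W x (V x) ∂μ
      ≤ ∫⁻ x, liminf (fun n => W x (U (ψ (χ n)) x)) atTop ∂μ := by
        refine lintegral_mono_ae ?_
        filter_upwards [hχ, hWl] with x hx hWx
        exact (hWx.le_liminf (V x)).trans (liminf_le_liminf_of_le hx)
    _ ≤ liminf (fun n => ∫⁻ x, W x (U (ψ (χ n)) x) ∂μ) atTop :=
        lintegral_liminf_le' fun n => aemeasurable_uncurry_apply hWm (hU _).aemeasurable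
    _ ≤ c := liminf_le_of_frequently_le' (.of_forall fun n => (hψc (χ n)).le)

theorem exists_ofReal_one_sub_mul_le {Z η : ℝ≥0∞} (hZ : Z ≠ ⊤) (hη : η ≠ 0) :
    ∃ t : ℝ, 0 ≤ t ∧ t < 1 ∧ ENNReal.ofReal (1 - t) * Z ≤ η := by
  have mul_tendsto : Tendsto (fun t : ℝ => ENNReal.ofReal (1 - t) * Z) (𝓝[<] 1) (𝓝 0) := by
    have : Tendsto (fun t : ℝ => 1 - t) (𝓝[<] 1) (𝓝 0) := by
      simpa using ((continuous_sub_left (1 : ℝ)).tendsto 1).mono_left nhdsWithin_le_nhds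
    simpa using ENNReal.Tendsto.mul_const (ENNReal.tendsto_ofReal this) (.inr hZ)
  obtain ⟨t, htZ, ht⟩ := ((mul_tendsto.eventually (ge_mem_nhds (pos_iff_ne_zero.2 hη))).and
    (Ioo_mem_nhdsLT (zero_lt_one' ℝ))).exists
  exact ⟨t, ht.1.le, ht.2, htZ⟩

theorem memLp_restrict_of_continuousOn_closure {X E : Type*} [MetricSpace X] [ProperSpace X]
    [MeasurableSpace X] [BorelSpace X] [NormedAddCommGroup E] [SecondCountableTopology E]
    {μ : Measure X} [IsFiniteMeasureOnCompacts μ] {Ω : Set X} (hΩ : MeasurableSet Ω)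
    (hΩb : Bornology.IsBounded Ω) {G : X → E} (hG : ContinuousOn G (closure Ω)) (q : ℝ≥0∞) :
    MemLp G q (μ.restrict Ω) := by
  have : IsFiniteMeasure (μ.restrict Ω) := isFiniteMeasure_restrict.2 hΩb.measure_lt_top.ne
  obtain ⟨B, hB⟩ := hΩb.isCompact_closure.exists_bound_of_continuousOn hG
  refine .of_bound ((hG.mono subset_closure).aestronglyMeasurable hΩ) B ?_
  filter_upwards [ae_restrict_mem hΩ] with x hx using hB x (subset_closure hx)

variable {d m : ℕ} {Ω : Set (Euc d)} {p : ℝ} {W : Euc d → Mat m d → ℝ≥0∞}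
  {G : Euc d → Mat m d} {v : Euc d → Euc m} {Dv : Euc d → Mat m d}

theorem MemW1p0.exists_isCcSmooth_setLIntegral_smul_le (hΩo : IsOpen Ω)
    (hΩb : Bornology.IsBounded Ω) (hΩl : HasLipschitzBoundary Ω) (hp : 1 ≤ p)
    (hpd : (d : ℝ) - 1 < p) (hWm : Measurable (Function.uncurry W))
    {θ : ℝ} (hθ : 0 < θ) {K : Euc d → ℝ≥0∞} (hK : Measurable K) (hKi : ∫⁻ x in Ω, K x ≠ ⊤)
    (hW : ∀ᵐ x ∂volume.restrict Ω, IsConvexBoundedNearZero (W x) θ (K x))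
    (hstab : StabilityEstimate Ω p W) (hG : ContinuousOn G (closure Ω)) {s : ℝ} (hs : 1 < s)
    (hGW : ∫⁻ x in Ω, W x (s • G x) ≠ ⊤) (hv : MemW1p0 Ω (ENNReal.ofReal p) v Dv)
    (hGv : ∫⁻ x in Ω, W x (G x + Dv x) ≠ ⊤) {t : ℝ} (ht : 0 ≤ t) (ht1 : t < 1) {η : ℝ≥0∞}
    (hη : η ≠ 0) :
    ∃ φ : Euc d → Euc m, IsCcSmooth Ω φ ∧
      eLpNorm (φ - v) (ENNReal.ofReal p) (volume.restrict Ω) ≤ η ∧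
      eLpNorm (smoothJac φ - Dv) (ENNReal.ofReal p) (volume.restrict Ω) ≤ η ∧
      ∫⁻ x in Ω, W x (G x + t • smoothJac φ x) ≤
        ENNReal.ofReal t * (∫⁻ x in Ω, W x (G x + Dv x)) +
        ENNReal.ofReal (1 - t) * ((∫⁻ x in Ω, W x (s • G x)) + ∫⁻ x in Ω, K x) + η := by
  have hΩm := hΩo.measurableSet
  have hη0 : 0 < η := pos_iff_ne_zero.2 hη
  have hG_memLp : MemLp G (ENNReal.ofReal p) (volume.restrict Ω) :=
    memLp_restrict_of_continuousOn_closure hΩm hΩb hG _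
  have hG_unif := (hΩb.isCompact_closure.uniformContinuousOn_of_continuous hG).mono subset_closure
  obtain ⟨φ, k, S, R, C, hφ, hφv, hae, hk, hJ⟩ := hv.exists_isAvgKernelSeq hΩo hΩb hΩl hp hpd
  have limsup_lt := (limsup_setLIntegral_map_add_smul_le hΩm hΩb.measure_lt_top.ne hp hWm hθ hK hKi
    hW hstab hG_unif hG_memLp hv.1.2.1 hs hGW hGv hk
    (fun n => (continuous_smoothJac (hφ n).contDiff_one).aemeasurable) hJ hae ht ht1).trans_lt
    (ENNReal.lt_add_right (by finiteness) hη)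
  obtain ⟨n, hnv, hnDv, hnW⟩ := ((hφv.1.eventually (ge_mem_nhds hη0)).and
    ((hφv.2.eventually (ge_mem_nhds hη0)).and (eventually_lt_of_limsup_lt limsup_lt))).exists
  exact ⟨φ n, hφ n, hnv, hnDv, hnW.le⟩

theorem MemW1p0.exists_isCcSmooth_setLIntegral_le (hΩo : IsOpen Ω)
    (hΩb : Bornology.IsBounded Ω) (hΩl : HasLipschitzBoundary Ω) (hp : 1 ≤ p)
    (hpd : (d : ℝ) - 1 < p) (hWm : Measurable (Function.uncurry W))
    {θ : ℝ} (hθ : 0 < θ) {K : Euc d → ℝ≥0∞} (hK : Measurable K) (hKi : ∫⁻ x in Ω, K x ≠ ⊤)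
    (hW : ∀ᵐ x ∂volume.restrict Ω, IsConvexBoundedNearZero (W x) θ (K x))
    (hstab : StabilityEstimate Ω p W) (hG : ContinuousOn G (closure Ω)) {s : ℝ} (hs : 1 < s)
    (hGW : ∫⁻ x in Ω, W x (s • G x) ≠ ⊤) (hv : MemW1p0 Ω (ENNReal.ofReal p) v Dv)
    {η : ℝ≥0∞} (hη : η ≠ 0) :
    ∃ φ : Euc d → Euc m, IsCcSmooth Ω φ ∧
      eLpNorm (φ - v) (ENNReal.ofReal p) (volume.restrict Ω) ≤ η ∧
      eLpNorm (smoothJac φ - Dv) (ENNReal.ofReal p) (volume.restrict Ω) ≤ η ∧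
      ∫⁻ x in Ω, W x (G x + smoothJac φ x) ≤ (∫⁻ x in Ω, W x (G x + Dv x)) + η := by
  rcases eq_or_ne (∫⁻ x in Ω, W x (G x + Dv x)) ⊤ with hGv | hGv
  · have hη0 : 0 < η := pos_iff_ne_zero.2 hη
    obtain ⟨w, hw, hwv, hwDv⟩ := hv.2
    obtain ⟨n, hnv, hnDv⟩ := ((hwv.eventually (ge_mem_nhds hη0)).and
      (hwDv.eventually (ge_mem_nhds hη0))).exists
    exact ⟨w n, hw n, hnv, hnDv, by simp [hGv]⟩
  have hη2 : η / 2 ≠ 0 := (ENNReal.half_pos hη).ne'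
  have hp1 : 1 ≤ ENNReal.ofReal p := ENNReal.one_le_ofReal.2 hp
  obtain ⟨t, ht, ht1, htZ⟩ := exists_ofReal_one_sub_mul_le
    (Z := eLpNorm v (ENNReal.ofReal p) (volume.restrict Ω) +
      eLpNorm Dv (ENNReal.ofReal p) (volume.restrict Ω) +
      ((∫⁻ x in Ω, W x (s • G x)) + ∫⁻ x in Ω, K x))
    (by simp [hv.1.1.2.ne, hv.1.2.1.2.ne, hGW, hKi]) hη2
  rw [mul_add, mul_add] at htZ
  obtain ⟨φ, hφ, hφv, hφDv, hφW⟩ := hv.exists_isCcSmooth_setLIntegral_smul_le hΩo hΩb hΩl hp hpd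
    hWm hθ hK hKi hW hstab hG hs hGW hGv ht ht1 hη2
  have Dφ_eq := smoothJac_smul (hφ.contDiff_one.differentiable one_ne_zero) t
  refine ⟨t • φ, hφ.smul t, ?_, ?_, ?_⟩
  · exact (eLpNorm_smul_sub_le hp1 (hφ.memLp 1).1 hv.1.1.1 ht ht1.le).trans
      ((add_le_add hφv (le_self_add.trans (le_self_add.trans htZ))).trans_eq
        (ENNReal.add_halves η))
  · rw [Dφ_eq]
    exact (eLpNorm_smul_sub_le hp1 (hφ.memLp_smoothJac 1).1 hv.1.2.1.1 ht ht1.le).trans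
      ((add_le_add hφDv (le_add_self.trans (le_self_add.trans htZ))).trans_eq
        (ENNReal.add_halves η))
  · rw [Dφ_eq]
    refine hφW.trans ((add_le_add_left (add_le_add ?_ (le_add_self.trans htZ)) _).trans_eq
      (by rw [add_assoc, ENNReal.add_halves]))
    exact mul_le_of_le_one_left' (ENNReal.ofReal_le_one.2 ht1.le)

theorem MemW1p0.exists_tendsto_setLIntegral (hΩo : IsOpen Ω)
    (hΩb : Bornology.IsBounded Ω) (hΩl : HasLipschitzBoundary Ω) (hp : 1 ≤ p)
    (hpd : (d : ℝ) - 1 < p) (hWm : Measurable (Function.uncurry W))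
    (hWl : ∀ᵐ x ∂volume.restrict Ω, LowerSemicontinuous (W x))
    {θ : ℝ} (hθ : 0 < θ) {K : Euc d → ℝ≥0∞} (hK : Measurable K) (hKi : ∫⁻ x in Ω, K x ≠ ⊤)
    (hW : ∀ᵐ x ∂volume.restrict Ω, IsConvexBoundedNearZero (W x) θ (K x))
    (hstab : StabilityEstimate Ω p W) (hG : ContinuousOn G (closure Ω)) {s : ℝ} (hs : 1 < s)
    (hGW : ∫⁻ x in Ω, W x (s • G x) ≠ ⊤) (hv : MemW1p0 Ω (ENNReal.ofReal p) v Dv) :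
    ∃ φ : ℕ → Euc d → Euc m, (∀ n, IsCcSmooth Ω (φ n)) ∧
      TendstoW1p Ω (ENNReal.ofReal p) φ (fun n => smoothJac (φ n)) v Dv ∧
      Tendsto (fun n => ∫⁻ x in Ω, W x (G x + smoothJac (φ n) x)) atTop
        (𝓝 (∫⁻ x in Ω, W x (G x + Dv x))) := by
  choose φ hφ hφv hφDv hφW using fun n : ℕ =>
    hv.exists_isCcSmooth_setLIntegral_le hΩo hΩb hΩl hp hpd hWm hθ hK hKi hW hstab hG hs hGW
      (ENNReal.inv_ne_zero.2 (ENNReal.natCast_ne_top n))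
  have hT : TendstoW1p Ω (ENNReal.ofReal p) φ (fun n => smoothJac (φ n)) v Dv :=
    ⟨tendsto_of_tendsto_of_tendsto_of_le_of_le tendsto_const_nhds
        ENNReal.tendsto_inv_nat_nhds_zero (fun _ => zero_le) hφv,
      tendsto_of_tendsto_of_tendsto_of_le_of_le tendsto_const_nhds
        ENNReal.tendsto_inv_nat_nhds_zero (fun _ => zero_le) hφDv⟩
  have hG_aesm : AEStronglyMeasurable G (volume.restrict Ω) :=
    (hG.mono subset_closure).aestronglyMeasurable hΩo.measurableSet
  have le_liminf := lintegral_le_liminf_of_tendsto_eLpNorm hWm hWl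
    (q := ENNReal.ofReal p) (by simpa using by linarith)
    (fun n => hG_aesm.add ((hφ n).memLp_smoothJac 1).1) (hG_aesm.add hv.1.2.1.1)
    (by simpa only [add_sub_add_left_eq_sub] using hT.2)
  have bound_tendsto : Tendsto (fun n : ℕ => (∫⁻ x in Ω, W x (G x + Dv x)) + (n : ℝ≥0∞)⁻¹) atTop
      (𝓝 (∫⁻ x in Ω, W x (G x + Dv x))) := by
    simpa using ENNReal.tendsto_inv_nat_nhds_zero.const_add (∫⁻ x in Ω, W x (G x + Dv x))
  exact ⟨φ, hφ, hT, tendsto_of_le_liminf_of_limsup_le le_liminf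
    ((limsup_le_limsup (.of_forall hφW)).trans_eq bound_tendsto.limsup_eq)⟩

theorem no_lavrentiev_gap_high_exponent_general (hΩo : IsOpen Ω) (hΩb : Bornology.IsBounded Ω)
    (hΩl : HasLipschitzBoundary Ω) (hp : 1 ≤ p) (hpd : (d : ℝ) - 1 < p)
    (hWm : Measurable (Function.uncurry W))
    (hWc : ∀ᵐ x ∂volume.restrict Ω, ConvexENNReal (W x) ∧ LowerSemicontinuous (W x))
    {θ : ℝ} (hθ : 0 < θ) (hWθ : ∫⁻ x in Ω, ⨆ ξ ∈ {ξ : Mat m d | frobNorm ξ ≤ θ}, W x ξ < ⊤)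
    (hstab : StabilityEstimate Ω p W) (hG : ContinuousOn G (closure Ω)) {s : ℝ} (hs : 1 < s)
    (hGW : ∫⁻ x in Ω, W x (s • G x) < ⊤) :
    (∀ (v : Euc d → Euc m) (Dv : Euc d → Mat m d), MemW1p0 Ω (ENNReal.ofReal p) v Dv →
        ∃ φ : ℕ → Euc d → Euc m, (∀ n, IsCcSmooth Ω (φ n)) ∧
          TendstoW1p Ω (ENNReal.ofReal p) φ (fun n => smoothJac (φ n)) v Dv ∧
          Tendsto (fun n => ∫⁻ x in Ω, W x (G x + smoothJac (φ n) x)) atTop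
            (𝓝 (∫⁻ x in Ω, W x (G x + Dv x)))) ∧
    sInf {e : ℝ≥0∞ | ∃ (v : Euc d → Euc m) (Dv : Euc d → Mat m d),
        MemW1p0 Ω (ENNReal.ofReal p) v Dv ∧ e = ∫⁻ x in Ω, W x (G x + Dv x)} =
      sInf {e : ℝ≥0∞ | ∃ φ : Euc d → Euc m, IsCcSmooth Ω φ ∧
        e = ∫⁻ x in Ω, W x (G x + smoothJac φ x)} := by
  obtain ⟨r, K, hr, hK, hKi, hW⟩ := exists_ae_isConvexBoundedNearZero hWm hWc hθ hWθ
  have recovery := fun v Dv (hv : MemW1p0 Ω (ENNReal.ofReal p) v Dv) =>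
    hv.exists_tendsto_setLIntegral hΩo hΩb hΩl hp hpd hWm (hWc.mono fun _ hx => hx.2) hr hK hKi hW
      hstab hG hs hGW.ne
  refine ⟨recovery, le_antisymm (sInf_le_sInf ?_) (le_sInf ?_)⟩
  · rintro e ⟨φ, hφ, rfl⟩
    exact ⟨φ, smoothJac φ, hφ.memW1p0 _, rfl⟩
  · rintro e ⟨v, Dv, hv, rfl⟩
    obtain ⟨φ, hφ, -, hφW⟩ := recovery v Dv hv
    exact ge_of_tendsto' hφW fun n => sInf_le ⟨φ n, hφ n, rfl⟩

end LavrentievGap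

/-- **Theorem 2.4.** Let `Ω ⊂ ℝ^d` be a bounded open set with Lipschitz
boundary, `p > d−1`, and let `W : Ω × ℝ^{m×d} → [0,+∞]` satisfy Assumption 1. Let
`g ∈ C_c^1(ℝ^d)^m` satisfy `∫_Ω W(x, s Dg) dx < ∞` for some `s > 1`. Then every
`u = g + v ∈ g + W_0^{1,p}(Ω)^m` can be approximated by `u_n = g + φ_n ∈ g + C_c^∞(Ω)^m`
strongly in `W^{1,p}` with convergence of the energies; in particular the infima of the
energy over `g + W_0^{1,p}(Ω)^m` and over `g + C_c^∞(Ω)^m` coincide. -/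
theorem no_lavrentiev_gap_high_exponent
    (d m : ℕ) (Ω : Set (Euc d)) (hΩo : IsOpen Ω) (hΩb : Bornology.IsBounded Ω)
    (hΩl : HasLipschitzBoundary Ω)
    (p : ℝ) (hp1 : 1 ≤ p) (hpd : (d : ℝ) - 1 < p)
    (W : Euc d → Mat m d → ℝ≥0∞)
    (hW : Assumption1 Ω p W)
    (g : Euc d → Euc m) (hg1 : ContDiff ℝ 1 g) (hgc : HasCompactSupport g)
    (hgW : ∃ s : ℝ, 1 < s ∧ (∫⁻ x in Ω, W x (s • smoothJac g x)) < ⊤) :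
    (∀ (v : Euc d → Euc m) (Dv : Euc d → Mat m d),
        MemW1p0 Ω (ENNReal.ofReal p) v Dv →
        ∃ φ : ℕ → Euc d → Euc m, (∀ n, IsCcSmooth Ω (φ n)) ∧
          TendstoW1p Ω (ENNReal.ofReal p) φ (fun n => smoothJac (φ n)) v Dv ∧
          Tendsto (fun n => ∫⁻ x in Ω, W x (smoothJac g x + smoothJac (φ n) x)) atTop
            (𝓝 (∫⁻ x in Ω, W x (smoothJac g x + Dv x)))) ∧
    sInf {e : ℝ≥0∞ | ∃ (v : Euc d → Euc m) (Dv : Euc d → Mat m d),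
        MemW1p0 Ω (ENNReal.ofReal p) v Dv ∧
        e = ∫⁻ x in Ω, W x (smoothJac g x + Dv x)} =
      sInf {e : ℝ≥0∞ | ∃ φ : Euc d → Euc m, IsCcSmooth Ω φ ∧
        e = ∫⁻ x in Ω, W x (smoothJac g x + smoothJac φ x)} := by
  obtain ⟨s, hs, hgW⟩ := hgW
  obtain ⟨θ, hθ, hWθ⟩ := hW.2.2.2.1.2 hpd
  exact no_lavrentiev_gap_high_exponent_general hΩo hΩb hΩl hp1 hpd hW.1 hW.2.1 hθ hWθ hW.2.2.2.2
    (continuous_smoothJac hg1).continuousOn hs hgW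

end
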